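/- arXiv:2310.14742 — 2 statements merged into one kernel-verified Lean document; each statement's English description precedes it below -/
import Mathlib

section
/- Let d ≥ 3 and let D ⊂ ℝ^d be a hyperbolic convex domain such that the metric space (D, ρ_D) is Gromov hyperbolic. Then every conformal harmonic map f : 𝔻 → ∂D is constant. -/
open scoped RealInnerProductSpace ENNReal
open Metric Set Filter

noncomputable section

/-- Euclidean space `ℝ^d`. -/
abbrev Euc (d : ℕ) := EuclideanSpace ℝ (Fin d)

/-- The open unit disk in `ℝ²`. -/
def unitDisk : Set (Euc 2) := Metric.ball 0 1

/-- Partial derivative of `f` at `z` in the `i`-th coordinate direction. -/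
def pd {d : ℕ} (i : Fin 2) (f : Euc 2 → Euc d) (z : Euc 2) : Euc d :=
  fderiv ℝ f z (EuclideanSpace.single i 1)

/-- `f` is a conformal harmonic map on the unit disk: it is `C²`, its (vector)
Laplacian vanishes (equivalently, every component is harmonic), and at each point
its two partial derivatives are orthogonal and of equal norm. -/
def ConformalHarmonicOnDisk {d : ℕ} (f : Euc 2 → Euc d) : Prop :=
  ContDiffOn ℝ 2 f unitDisk ∧
  (∀ z ∈ unitDisk,
    fderiv ℝ (pd 0 f) z (EuclideanSpace.single 0 1)
      + fderiv ℝ (pd 1 f) z (EuclideanSpace.single 1 1) = 0) ∧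
  (∀ z ∈ unitDisk, ‖pd 0 f z‖ = ‖pd 1 f z‖ ∧ ⟪pd 0 f z, pd 1 f z⟫ = 0)

/-- The minimal (Forstnerič–Kalaj) metric of a domain `D ⊆ ℝ^d`:
`g_D(x,v) = inf {1/r : r > 0, f ∈ CH(𝔻, D), f 0 = x, f_x 0 = r • v}`. -/
def minMetric {d : ℕ} (D : Set (Euc d)) (x v : Euc d) : ℝ :=
  sInf {c : ℝ | ∃ r : ℝ, 0 < r ∧ c = 1 / r ∧
    ∃ f : Euc 2 → Euc d, ConformalHarmonicOnDisk f ∧ (∀ z ∈ unitDisk, f z ∈ D) ∧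
      f 0 = x ∧ pd 0 f 0 = r • v}

/-- `γ` is a piecewise `C¹` curve on `[a, b]`. -/
def PiecewiseC1On {d : ℕ} (γ : ℝ → Euc d) (a b : ℝ) : Prop :=
  ContinuousOn γ (Set.Icc a b) ∧
  ∃ (n : ℕ) (t : Fin (n + 2) → ℝ), Monotone t ∧ t 0 = a ∧ t (Fin.last (n + 1)) = b ∧
    ∀ i : Fin (n + 1), ContDiffOn ℝ 1 γ (Set.Icc (t i.castSucc) (t i.succ))

/-- The minimal pseudodistance `ρ_D`: infimum of minimal lengths of piecewise `C¹`
curves in `D` joining `x` to `y`. -/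
def minDist {d : ℕ} (D : Set (Euc d)) (x y : Euc d) : ℝ :=
  sInf {L : ℝ | ∃ γ : ℝ → Euc d, PiecewiseC1On γ 0 1 ∧
    (∀ t ∈ Set.Icc (0:ℝ) 1, γ t ∈ D) ∧ γ 0 = x ∧ γ 1 = y ∧
    L = ∫ t in (0:ℝ)..(1:ℝ), minMetric D (γ t) (deriv γ t)}

/-- The Gromov product `(x|y)_o` with respect to the minimal pseudodistance of `D`. -/
def gromovProd {d : ℕ} (D : Set (Euc d)) (o x y : Euc d) : ℝ :=
  (minDist D x o + minDist D y o - minDist D x y) / 2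

/-- `D` is hyperbolic: the minimal pseudodistance is a genuine distance. -/
def MinHyperbolic {d : ℕ} (D : Set (Euc d)) : Prop :=
  ∀ x ∈ D, ∀ y ∈ D, x ≠ y → 0 < minDist D x y

/-- The Hessian quadratic form of `u` at `x` in direction `v`. -/
def hessQ {d : ℕ} (u : Euc d → ℝ) (x v : Euc d) : ℝ :=
  fderiv ℝ (fun y => fderiv ℝ u y v) x v

/-- `D` is a bounded domain with `C²` boundary, described by a `C²` defining
function `u` on a neighborhood `U` of `∂D` with nonvanishing differential. -/
def IsC2BoundedDomain {d : ℕ} (D : Set (Euc d)) : Prop :=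
  IsOpen D ∧ IsConnected D ∧ Bornology.IsBounded D ∧
  ∃ (U : Set (Euc d)) (u : Euc d → ℝ), IsOpen U ∧ frontier D ⊆ U ∧ ContDiffOn ℝ 2 u U ∧
    D ∩ U = {x | x ∈ U ∧ u x < 0} ∧ frontier D = {x | x ∈ U ∧ u x = 0} ∧
    ∀ x ∈ frontier D, fderiv ℝ u x ≠ 0

/-- `D` is a bounded strongly minimally convex domain: it has a `C²` defining function
which is strongly minimally plurisubharmonic near `∂D`, i.e. the trace of its Hessian
on every 2-plane (spanned by an orthonormal pair `v, w`) is strictly positive. -/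
def IsStronglyMinimallyConvex {d : ℕ} (D : Set (Euc d)) : Prop :=
  IsOpen D ∧ IsConnected D ∧ Bornology.IsBounded D ∧
  ∃ (U : Set (Euc d)) (u : Euc d → ℝ), IsOpen U ∧ frontier D ⊆ U ∧ ContDiffOn ℝ 2 u U ∧
    D ∩ U = {x | x ∈ U ∧ u x < 0} ∧ frontier D = {x | x ∈ U ∧ u x = 0} ∧
    (∀ x ∈ frontier D, fderiv ℝ u x ≠ 0) ∧
    (∀ x ∈ U, ∀ v w : Euc d, ‖v‖ = 1 → ‖w‖ = 1 → ⟪v, w⟫ = 0 →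
      0 < hessQ u x v + hessQ u x w)

/-- `D` is a bounded strongly convex domain: convex, with a `C²` defining function whose
Hessian is positive definite on the tangent space at every boundary point
(equivalently, all principal curvatures of `∂D` w.r.t. the inner normal are positive). -/
def IsStronglyConvexDomain {d : ℕ} (D : Set (Euc d)) : Prop :=
  IsOpen D ∧ IsConnected D ∧ Bornology.IsBounded D ∧ Convex ℝ D ∧
  ∃ (U : Set (Euc d)) (u : Euc d → ℝ), IsOpen U ∧ frontier D ⊆ U ∧ ContDiffOn ℝ 2 u U ∧
    D ∩ U = {x | x ∈ U ∧ u x < 0} ∧ frontier D = {x | x ∈ U ∧ u x = 0} ∧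
    (∀ x ∈ frontier D, fderiv ℝ u x ≠ 0) ∧
    (∀ ξ ∈ frontier D, ∀ w : Euc d, w ≠ 0 → fderiv ℝ u ξ w = 0 → 0 < hessQ u ξ w)

/-- For `x ∈ D` with nearest boundary point `p`, the outer unit normal direction
`n_{π(x)} = (p - x)/‖p - x‖`. -/
def nvec {d : ℕ} (x p : Euc d) : Euc d := ‖p - x‖⁻¹ • (p - x)

/-- Normal component of `v` at `x` with nearest boundary point `p`. -/
def vN {d : ℕ} (x p v : Euc d) : Euc d := ⟪v, nvec x p⟫ • nvec x p

/-- Tangential component of `v` at `x` with nearest boundary point `p`. -/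
def vT {d : ℕ} (x p v : Euc d) : Euc d := v - vN x p v

/-- The intrinsic distance `H` on the boundary `∂D`: infimum of Euclidean lengths of
piecewise `C¹` curves in `∂D` joining two boundary points. -/
def bdist {d : ℕ} (D : Set (Euc d)) (ξ η : Euc d) : ℝ :=
  sInf {L : ℝ | ∃ α : ℝ → Euc d, PiecewiseC1On α 0 1 ∧
    (∀ t ∈ Set.Icc (0:ℝ) 1, α t ∈ frontier D) ∧ α 0 = ξ ∧ α 1 = η ∧
    L = ∫ t in (0:ℝ)..(1:ℝ), ‖deriv α t‖}

/-- `h(x) = δ_D(x)^{1/2}`. -/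
def hfun {d : ℕ} (D : Set (Euc d)) (x : Euc d) : ℝ :=
  Real.sqrt (Metric.infDist x (frontier D))

/-- The length of a curve with respect to the boundary Finsler metric
`F(x,v) = ‖v_N‖/(2 δ_D(x)) + ‖v_T‖/δ_D(x)^{1/2}`. -/
def Flen {d : ℕ} (D : Set (Euc d)) (π : Euc d → Euc d) (γ : ℝ → Euc d) : ℝ :=
  ∫ t in (0:ℝ)..(1:ℝ),
    (‖vN (γ t) (π (γ t)) (deriv γ t)‖ / (2 * Metric.infDist (γ t) (frontier D))
      + ‖vT (γ t) (π (γ t)) (deriv γ t)‖ / Real.sqrt (Metric.infDist (γ t) (frontier D)))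

/-- The filling Finsler metric `F`: the boundary Finsler metric on
`N = {δ_D ≤ ε}` and `c‖v‖` elsewhere. -/
def Fmet {d : ℕ} (D : Set (Euc d)) (π : Euc d → Euc d) (ε c : ℝ) (x v : Euc d) : ℝ :=
  if Metric.infDist x (frontier D) ≤ ε then
    ‖vN x (π x) v‖ / (2 * Metric.infDist x (frontier D))
      + ‖vT x (π x) v‖ / Real.sqrt (Metric.infDist x (frontier D))
  else c * ‖v‖

/-- The intrinsic distance `d_F` associated to the filling Finsler metric `F`. -/
def dF {d : ℕ} (D : Set (Euc d)) (π : Euc d → Euc d) (ε c : ℝ) (x y : Euc d) : ℝ :=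
  sInf {L : ℝ | ∃ γ : ℝ → Euc d, PiecewiseC1On γ 0 1 ∧
    (∀ t ∈ Set.Icc (0:ℝ) 1, γ t ∈ D) ∧ γ 0 = x ∧ γ 1 = y ∧
    L = ∫ t in (0:ℝ)..(1:ℝ), Fmet D π ε c (γ t) (deriv γ t)}

/-- The hyperbolic filling distance
`d_H(x,y) = 2 log((H(π x, π y) + h(x) ∨ h(y)) / √(h(x) h(y)))`. -/
def dH {d : ℕ} (D : Set (Euc d)) (π : Euc d → Euc d) (x y : Euc d) : ℝ :=
  2 * Real.log ((bdist D (π x) (π y) + max (hfun D x) (hfun D y)) /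
    Real.sqrt (hfun D x * hfun D y))

/-- `δ̂_D(x,v)`: the supremum over 2-dimensional linear subspaces `Λ ∋ v` of the
distance (in `ℝ≥0∞`, so `∞` if `x + Λ ⊆ D`) from `x` to `(x + Λ) \ D`. -/
def deltaHat {d : ℕ} (D : Set (Euc d)) (x v : Euc d) : ℝ≥0∞ :=
  ⨆ (Λ : Submodule ℝ (Euc d)) (_ : Module.finrank ℝ Λ = 2) (_ : v ∈ Λ),
    ⨅ (y : Euc d) (_ : y - x ∈ Λ ∧ y ∉ D), edist x y

/-- The positive parameter at which the ray `t ↦ x + t • v` exits the convex domain `D`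
(equal to `0`, by the `sInf ∅ = 0` convention, when the ray stays in `D`,
i.e. when the corresponding chord endpoint is the point at infinity). -/
def chordParam {d : ℕ} (D : Set (Euc d)) (x v : Euc d) : ℝ :=
  sInf {s : ℝ | 0 < s ∧ x + s • v ∉ D}

/-- The Hilbert Finsler metric `h_D(x,v) = (‖v‖/2)(1/‖x-a‖ + 1/‖x-b‖)` of a convex
domain, with the convention `1/‖x-∞‖ = 0` (here `‖x-b‖ = chordParam D x v • ‖v‖` and
`‖x-a‖ = chordParam D x (-v) • ‖v‖`, and division by zero is zero). -/
def hilbertFinsler {d : ℕ} (D : Set (Euc d)) (x v : Euc d) : ℝ :=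
  (1/2) * (1 / chordParam D x v + 1 / chordParam D x (-v))

/- The Hilbert distance of a convex domain: for `x ≠ y`,
`H_D(x,y) = ½ log((‖x-b‖ ‖y-a‖)/(‖x-a‖ ‖y-b‖))` where `a, x, y, b` are aligned on the
chord through `x, y`, with the convention that ratios involving the point at infinity
(detected by `chordParam = 0`) are equal to `1`. -/
open Classical in
def hilbertDist {d : ℕ} (D : Set (Euc d)) (x y : Euc d) : ℝ :=
  if x = y then 0 else
    (1/2) * Real.log
      ((if chordParam D x (y - x) = 0 then 1
        else chordParam D x (y - x) / (chordParam D x (y - x) - 1)) *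
       (if chordParam D x (x - y) = 0 then 1
        else (1 + chordParam D x (x - y)) / chordParam D x (x - y)))

/-!
Suppose that a nonconstant conformal harmonic disk lies in `∂D`. By the maximum principle it lies
in a face of `D`, which therefore contains a flat ball of dimension at least two. Since `D` is
hyperbolic, its closure contains no plane, so some ray from the centre of that ball leaves the face
at a point `ξ`. On the cone over this part of the face, parametrised by the distance `a` to `ξ` and
the height `s` over the face, convexity gives inscribed balls of radius comparable to `s` and
inscribed flat disks of radius comparable to `a`. Halving `a` or `s` is thus a step of bounded
length for `ρ_D`, and `(log a, log s)` are coordinates on arbitrarily large grids with bounded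
steps.

On the other hand `|log (c - l x) - log (c - l y)| ≤ 2 ρ_D(x, y)` whenever `l < c` on `D`. Applied
to the hyperplane of the face this separates the top of a grid from its bottom; applied to a
hyperplane separating `D` from a point just beyond `ξ` it separates the two vertical sides. In a
Gromov hyperbolic space, a point between the endpoints of a chain with bounded steps is within
`O(log n)` of the chain, where `n` is the number of steps. Hence a point half-way down an almost
shortest curve between opposite corners is close to both boundary paths joining these corners. Being
far from top and bottom it is close to both vertical sides, which is impossible for large grids.
-/

/-! ### Harmonic functions on planar disks -/

section Harmonic

open InnerProductSpace

variable {E E' F : Type*} [NormedAddCommGroup E] [InnerProductSpace ℝ E] [FiniteDimensional ℝ E]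
  [NormedAddCommGroup E'] [InnerProductSpace ℝ E'] [FiniteDimensional ℝ E']
  [NormedAddCommGroup F] [NormedSpace ℝ F]

lemma laplacian_comp_linearIsometryEquiv (f : E' → F) (e : E ≃ₗᵢ[ℝ] E') (x : E) :
    Laplacian.laplacian (f ∘ e) x = Laplacian.laplacian f (e x) := by
  let b := stdOrthonormalBasis ℝ E
  rw [laplacian_eq_iteratedFDeriv_orthonormalBasis _ b,
    laplacian_eq_iteratedFDeriv_orthonormalBasis _ (b.map e)]
  refine Finset.sum_congr rfl fun i _ => ?_
  have h := e.toContinuousLinearEquiv.iteratedFDerivWithin_comp_right f uniqueDiffOn_univ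
    (mem_univ (e x)) 2
  simp only [LinearIsometryEquiv.coe_toContinuousLinearEquiv, preimage_univ,
    iteratedFDerivWithin_univ] at h
  rw [h, ContinuousMultilinearMap.compContinuousLinearMap_apply]
  congr 1
  ext j
  fin_cases j <;> simp

lemma harmonicAt_comp_linearIsometryEquiv {f : E' → F} (e : E ≃ₗᵢ[ℝ] E') {x : E}
    (hf : HarmonicAt f (e x)) : HarmonicAt (f ∘ e) x := by
  refine ⟨hf.1.comp x e.contDiff.contDiffAt, ?_⟩
  filter_upwards [e.continuous.continuousAt.eventually hf.2] with y hy
  rw [laplacian_comp_linearIsometryEquiv, hy]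
  rfl

variable {c : ℂ} {R : ℝ}

/-- The Schwarz lemma for the Cayley transform `(F - F c) / (F + conj (F c))`. -/
lemma norm_deriv_le_of_re_pos {F : ℂ → ℂ} (hR : 0 < R) (hF : DifferentiableOn ℂ F (ball c R))
    (hpos : ∀ z ∈ ball c R, 0 < (F z).re) : ‖deriv F c‖ ≤ 2 * (F c).re / R := by
  have hc : c ∈ ball c R := mem_ball_self hR
  set a := F c with ha
  have ha_pos : 0 < a.re := hpos c hc
  have hne : ∀ z ∈ ball c R, F z + (starRingEnd ℂ) a ≠ 0 := by
    intro z hz h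
    have := congrArg Complex.re h
    simp only [Complex.add_re, Complex.conj_re, Complex.zero_re] at this
    linarith [hpos z hz]
  have hcayley : ∀ z ∈ ball c R, ‖(F z - a) / (F z + (starRingEnd ℂ) a)‖ ≤ 1 := by
    intro z hz
    rw [norm_div, div_le_one (norm_pos_iff.mpr (hne z hz)),
      ← sq_le_sq₀ (norm_nonneg _) (norm_nonneg _), ← Complex.normSq_eq_norm_sq,
      ← Complex.normSq_eq_norm_sq, Complex.normSq_apply, Complex.normSq_apply]
    simp only [Complex.sub_re, Complex.sub_im, Complex.add_re, Complex.add_im, Complex.conj_re,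
      Complex.conj_im]
    nlinarith [mul_pos (hpos z hz) ha_pos]
  have hschwarz := Complex.norm_deriv_le_div_of_mapsTo_ball
    ((hF.sub_const a).div (hF.add_const ((starRingEnd ℂ) a)) hne)
    (fun z hz => by simpa [← ha] using hcayley z hz) hR
  have hFc : HasDerivAt F (deriv F c) c :=
    (hF.differentiableAt (isOpen_ball.mem_nhds hc)).hasDerivAt
  have hderiv := (hFc.sub_const a).div (hFc.add_const ((starRingEnd ℂ) a)) (hne c hc)
  rw [hderiv.deriv, ← ha, sub_self, zero_mul, sub_zero, sq,
    mul_div_mul_right _ _ (hne c hc), norm_div, Complex.add_conj, Complex.norm_real,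
    Real.norm_of_nonneg (by positivity), div_le_iff₀ (by positivity)] at hschwarz
  exact hschwarz.trans_eq (by ring)

lemma abs_fderiv_le_of_harmonic_of_pos {u : ℂ → ℝ} (hR : 0 < R) (hu : HarmonicOnNhd u (ball c R))
    (hpos : ∀ z ∈ ball c R, 0 < u z) (v : ℂ) : |fderiv ℝ u c v| ≤ 2 * u c / R * ‖v‖ := by
  have hc : c ∈ ball c R := mem_ball_self hR
  obtain ⟨F, hF, hre⟩ := hu.exists_analyticOnNhd_ball_re_eq
  have hbound : ‖deriv F c‖ ≤ 2 * u c / R := by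
    rw [← hre hc]
    exact norm_deriv_le_of_re_pos hR hF.differentiableOn
      fun z hz => (hpos z hz).trans_eq (hre hz).symm
  have hFc : HasFDerivAt F _ c := (hF c hc).differentiableAt.hasDerivAt.complexToReal_fderiv
  have huc : HasFDerivAt u _ c := (Complex.reCLM.hasFDerivAt.comp c hFc).congr_of_eventuallyEq
    (hre.symm.eventuallyEq_of_mem (isOpen_ball.mem_nhds hc))
  have hderiv : fderiv ℝ u c v = (deriv F c * v).re := by
    rw [huc.fderiv]
    simp
  calc |fderiv ℝ u c v| ≤ ‖deriv F c * v‖ := hderiv ▸ Complex.abs_re_le_norm _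
    _ ≤ 2 * u c / R * ‖v‖ := by rw [norm_mul]; gcongr

/-- The maximum modulus principle for `exp F`, with `F` holomorphic of real part `u`. -/
lemma eqOn_const_of_harmonic_of_isMaxOn {u : ℂ → ℝ} {w : ℂ} (hu : HarmonicOnNhd u (ball c R))
    (hw : w ∈ ball c R) (hmax : IsMaxOn u (ball c R) w) :
    EqOn u (Function.const ℂ (u w)) (ball c R) := by
  intro z hz
  obtain ⟨F, hF, hre⟩ := hu.exists_analyticOnNhd_ball_re_eq
  have hnorm : ∀ y ∈ ball c R, ‖Complex.exp (F y)‖ = Real.exp (u y) := fun y hy => by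
    rw [Complex.norm_exp, ← hre hy]
  have hmax_exp : IsMaxOn (norm ∘ fun y => Complex.exp (F y)) (ball c R) w := fun y hy => by
    simpa only [mem_ofPred_eq, Function.comp_apply, hnorm y hy, hnorm w hw, Real.exp_le_exp]
      using hmax hy
  have hconst := congrArg norm (Complex.eqOn_of_isPreconnected_of_isMaxOn_norm
    (convex_ball c R).isPreconnected isOpen_ball hF.differentiableOn.cexp hw hmax_exp hz)
  rw [Function.const_apply, hnorm z hz, hnorm w hw] at hconst
  exact Real.exp_injective hconst

end Harmonic

/-! ### Conformal harmonic disks -/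

section ConformalHarmonic

open InnerProductSpace

variable {d : ℕ} {f : Euc 2 → Euc d}

lemma zero_mem_unitDisk : (0 : Euc 2) ∈ unitDisk := mem_ball_self one_pos

lemma isOpen_unitDisk : IsOpen unitDisk := isOpen_ball

lemma ConformalHarmonicOnDisk.contDiffAt (hf : ConformalHarmonicOnDisk f) {z : Euc 2}
    (hz : z ∈ unitDisk) : ContDiffAt ℝ 2 f z :=
  hf.1.contDiffAt (isOpen_unitDisk.mem_nhds hz)

lemma ConformalHarmonicOnDisk.differentiableAt (hf : ConformalHarmonicOnDisk f) {z : Euc 2}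
    (hz : z ∈ unitDisk) : DifferentiableAt ℝ f z :=
  (hf.contDiffAt hz).differentiableAt two_ne_zero

lemma fderiv_pd_apply {z : Euc 2} (hf : DifferentiableAt ℝ (fderiv ℝ f) z) (i : Fin 2)
    (v : Euc 2) :
    fderiv ℝ (pd i f) z v = fderiv ℝ (fderiv ℝ f) z v (EuclideanSpace.single i 1) := by
  change fderiv ℝ (fun y => fderiv ℝ f y (EuclideanSpace.single i 1)) z v = _
  rw [fderiv_clm_apply hf (by fun_prop)]
  simp

lemma ConformalHarmonicOnDisk.harmonicOnNhd (hf : ConformalHarmonicOnDisk f) :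
    HarmonicOnNhd f unitDisk := by
  intro z hz
  refine ⟨hf.contDiffAt hz, ?_⟩
  filter_upwards [isOpen_unitDisk.mem_nhds hz] with w hw
  have hdiff : DifferentiableAt ℝ (fderiv ℝ f) w :=
    ((hf.contDiffAt hw).fderiv_right (m := 1) (by norm_num)).differentiableAt one_ne_zero
  have hlap := hf.2.1 w hw
  rw [fderiv_pd_apply hdiff, fderiv_pd_apply hdiff] at hlap
  simpa [laplacian_eq_iteratedFDeriv_orthonormalBasis f (EuclideanSpace.basisFun (Fin 2) ℝ),
    iteratedFDeriv_two_apply] using hlap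

lemma ConformalHarmonicOnDisk.harmonicOnNhd_complex (hf : ConformalHarmonicOnDisk f)
    (l : Euc d →L[ℝ] ℝ) :
    HarmonicOnNhd ((l ∘ f) ∘ Complex.orthonormalBasisOneI.repr) (ball 0 1) := fun z hz =>
  harmonicAt_comp_linearIsometryEquiv _
    (hf.harmonicOnNhd.comp_CLM l _ (by simpa [unitDisk] using hz))

lemma ConformalHarmonicOnDisk.abs_apply_pd_le (hf : ConformalHarmonicOnDisk f)
    {l : Euc d →L[ℝ] ℝ} {c : ℝ} (hl : ∀ z ∈ unitDisk, l (f z) < c) :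
    |l (pd 0 f 0)| ≤ 2 * (c - l (f 0)) := by
  let e := Complex.orthonormalBasisOneI.repr
  have hu : HarmonicOnNhd (fun z => c - ((l ∘ f) ∘ e) z) (ball 0 1) :=
    (harmonicOnNhd_const c).sub (hf.harmonicOnNhd_complex l)
  have hbound := abs_fderiv_le_of_harmonic_of_pos one_pos hu
    (fun z hz => sub_pos.mpr (hl _ (by simpa [unitDisk, e] using hz))) 1
  have he : e 1 = EuclideanSpace.single 0 1 := by
    simpa using Complex.orthonormalBasisOneI.repr_self 0
  have hf0 : HasFDerivAt f (fderiv ℝ f 0) (e 0) := by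
    simpa using (hf.differentiableAt zero_mem_unitDisk).hasFDerivAt
  have hderiv : HasFDerivAt (fun z => c - ((l ∘ f) ∘ e) z) _ 0 :=
    ((l.hasFDerivAt.comp (e 0) hf0).comp 0 e.toContinuousLinearEquiv.hasFDerivAt).const_sub c
  rw [hderiv.fderiv] at hbound
  simpa [e, he, pd] using hbound

lemma ConformalHarmonicOnDisk.apply_eq_of_isMaxOn (hf : ConformalHarmonicOnDisk f)
    {l : Euc d →L[ℝ] ℝ} {p z : Euc 2} (hp : p ∈ unitDisk) (hmax : IsMaxOn (l ∘ f) unitDisk p)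
    (hz : z ∈ unitDisk) : l (f z) = l (f p) := by
  let e := Complex.orthonormalBasisOneI.repr
  have hmem : ∀ y ∈ unitDisk, e.symm y ∈ ball (0 : ℂ) 1 := fun y hy => by
    rw [mem_ball_zero_iff, LinearIsometryEquiv.norm_map]
    exact mem_ball_zero_iff.mp hy
  have hcomp : ∀ y, ((l ∘ f) ∘ e) (e.symm y) = l (f y) := fun y => by
    simp only [Function.comp_apply, LinearIsometryEquiv.apply_symm_apply]
  have hmax' : IsMaxOn ((l ∘ f) ∘ e) (ball 0 1) (e.symm p) := fun w hw =>
    (hmax (show e w ∈ unitDisk by simpa [unitDisk, e] using hw)).trans_eq (hcomp p).symm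
  rw [← hcomp z, ← hcomp p]
  exact eqOn_const_of_harmonic_of_isMaxOn (hf.harmonicOnNhd_complex l) (hmem p hp) hmax' (hmem z hz)

end ConformalHarmonic

/-! ### Flat disks and bounds for the minimal metric -/

section ConformalPair

variable {E : Type*} [NormedAddCommGroup E] [InnerProductSpace ℝ E]

/-- `v` and `w` are orthogonal of the same length; equivalently, the linear map
`(s, t) ↦ s • v + t • w` is conformal (or zero). -/
def IsConformalPair (v w : E) : Prop :=
  ‖v‖ = ‖w‖ ∧ ⟪v, w⟫ = 0

lemma IsConformalPair.smul {v w : E} (h : IsConformalPair v w) (r : ℝ) :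
    IsConformalPair (r • v) (r • w) := by
  refine ⟨by rw [norm_smul, norm_smul, h.1], ?_⟩
  rw [inner_smul_left, inner_smul_right, h.2, mul_zero, mul_zero]

lemma IsConformalPair.norm_smul_add_smul {v w : E} (h : IsConformalPair v w) (ζ : Euc 2) :
    ‖ζ 0 • v + ζ 1 • w‖ = ‖ζ‖ * ‖v‖ := by
  rw [← sq_eq_sq₀ (norm_nonneg _) (by positivity), mul_pow, EuclideanSpace.norm_sq_eq,
    norm_add_sq_real, norm_smul, norm_smul, inner_smul_left, inner_smul_right, h.2, ← h.1]
  simp only [Fin.sum_univ_two, mul_pow]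
  ring

lemma exists_isConformalPair {Λ : Submodule ℝ E} (hΛ : 2 ≤ Module.finrank ℝ Λ) {v : E}
    (hv : v ∈ Λ) : ∃ w ∈ Λ, IsConformalPair v w := by
  have hspan : (ℝ ∙ (⟨v, hv⟩ : Λ)) ≠ ⊤ := fun h => by
    have := finrank_span_le_card (R := ℝ) {(⟨v, hv⟩ : Λ)}
    rw [h, finrank_top, toFinset_singleton, Finset.card_singleton] at this
    omega
  obtain ⟨w, hw, hw0⟩ :=
    Submodule.exists_mem_ne_zero_of_ne_bot (mt Submodule.orthogonal_eq_bot_iff.mp hspan)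
  have horth : ⟪(⟨v, hv⟩ : Λ), w⟫ = 0 := Submodule.mem_orthogonal_singleton_iff_inner_right.mp hw
  have hw_norm : ‖(w : E)‖ ≠ 0 := by simpa using hw0
  refine ⟨(‖v‖ / ‖(w : E)‖) • w, Λ.smul_mem _ w.2, ?_, ?_⟩
  · rw [norm_smul, Real.norm_of_nonneg (by positivity), div_mul_cancel₀ _ hw_norm]
  · rw [Submodule.coe_inner] at horth
    rw [inner_smul_right, horth, mul_zero]

/-- The open ball of radius `ρ` about `x` in the affine subspace through `x` with
direction `Λ`. -/
def flatBall (Λ : Submodule ℝ E) (x : E) (ρ : ℝ) : Set E :=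
  {z | z - x ∈ Λ ∧ ‖z - x‖ < ρ}

lemma flatBall_subset_iff {Λ : Submodule ℝ E} {x : E} {ρ : ℝ} {S : Set E} :
    flatBall Λ x ρ ⊆ S ↔ ∀ y ∈ Λ, ‖y‖ < ρ → x + y ∈ S := by
  refine ⟨fun h y hy hyρ => h (by simpa [flatBall] using ⟨hy, hyρ⟩), fun h z hz => ?_⟩
  simpa using h (z - x) hz.1 hz.2

lemma IsConformalPair.two_le_finrank {Λ : Submodule ℝ E} [FiniteDimensional ℝ Λ] {v w : E}
    (h : IsConformalPair v w) (hv0 : v ≠ 0) (hv : v ∈ Λ) (hw : w ∈ Λ) :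
    2 ≤ Module.finrank ℝ Λ := by
  have hw0 : w ≠ 0 := norm_ne_zero_iff.mp (h.1 ▸ norm_ne_zero_iff.mpr hv0)
  have hli : LinearIndependent ℝ ![(⟨v, hv⟩ : Λ), ⟨w, hw⟩] := by
    refine linearIndependent_of_ne_zero_of_inner_eq_zero (fun i => ?_) fun i j hij => ?_
    · fin_cases i <;> simpa
    · fin_cases i <;> fin_cases j <;> simp_all [h.2, real_inner_comm]
  simpa using hli.fintype_card_le_finrank

end ConformalPair

section MinMetric

variable {d : ℕ} {D : Set (Euc d)} {x v w : Euc d}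

/-- The affine parametrisation `ζ ↦ x + ζ₀ v + ζ₁ w` of a plane. -/
def flatMap (x v w : Euc d) (ζ : Euc 2) : Euc d :=
  x + (ζ 0 • v + ζ 1 • w)

lemma hasFDerivAt_flatMap (x v w : Euc d) (ζ : Euc 2) :
    HasFDerivAt (flatMap x v w) ((EuclideanSpace.proj 0 : Euc 2 →L[ℝ] ℝ).smulRight v
      + (EuclideanSpace.proj 1 : Euc 2 →L[ℝ] ℝ).smulRight w) ζ :=
  ((EuclideanSpace.proj 0 : Euc 2 →L[ℝ] ℝ).smulRight v
    + (EuclideanSpace.proj 1 : Euc 2 →L[ℝ] ℝ).smulRight w).hasFDerivAt.const_add x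

lemma pd_zero_flatMap (x v w : Euc d) : pd 0 (flatMap x v w) = fun _ => v := by
  funext ζ
  simp [pd, (hasFDerivAt_flatMap x v w ζ).fderiv]

lemma pd_one_flatMap (x v w : Euc d) : pd 1 (flatMap x v w) = fun _ => w := by
  funext ζ
  simp [pd, (hasFDerivAt_flatMap x v w ζ).fderiv]

lemma IsConformalPair.conformalHarmonicOnDisk_flatMap (h : IsConformalPair v w) (x : Euc d) :
    ConformalHarmonicOnDisk (flatMap x v w) := by
  refine ⟨ContDiff.contDiffOn (by unfold flatMap; fun_prop), fun ζ _ => ?_, fun ζ _ => ?_⟩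
  · simp [pd_zero_flatMap, pd_one_flatMap]
  · rw [pd_zero_flatMap, pd_one_flatMap]
    exact h

lemma exists_conformalHarmonicOnDisk_of_flatBall_subset {Λ : Submodule ℝ (Euc d)}
    (hΛ : 2 ≤ Module.finrank ℝ Λ) (hv : v ∈ Λ) {r ρ : ℝ} (hr : 0 < r) (hρ : 0 < ρ)
    (hrv : r * ‖v‖ ≤ ρ) (hD : flatBall Λ x ρ ⊆ D) :
    ∃ f : Euc 2 → Euc d, ConformalHarmonicOnDisk f ∧ (∀ z ∈ unitDisk, f z ∈ D) ∧
      f 0 = x ∧ pd 0 f 0 = r • v := by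
  obtain ⟨w, hw, hvw⟩ := exists_isConformalPair hΛ hv
  refine ⟨flatMap x (r • v) (r • w), (hvw.smul r).conformalHarmonicOnDisk_flatMap x,
    fun ζ hζ => flatBall_subset_iff.mp hD _ ?_ ?_, by simp [flatMap], by rw [pd_zero_flatMap]⟩
  · exact Λ.add_mem (Λ.smul_mem _ (Λ.smul_mem _ hv)) (Λ.smul_mem _ (Λ.smul_mem _ hw))
  · rw [(hvw.smul r).norm_smul_add_smul, norm_smul, Real.norm_of_nonneg hr.le]
    have hζ1 : ‖ζ‖ < 1 := mem_ball_zero_iff.mp hζ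
    calc ‖ζ‖ * (r * ‖v‖) ≤ ‖ζ‖ * ρ := by gcongr
      _ < ρ := mul_lt_of_lt_one_left hρ hζ1

lemma minMetric_nonneg (D : Set (Euc d)) (x v : Euc d) : 0 ≤ minMetric D x v := by
  refine Real.sInf_nonneg ?_
  rintro _ ⟨r, hr, rfl, -⟩
  positivity

lemma minMetric_le_of_disk {f : Euc 2 → Euc d} (hf : ConformalHarmonicOnDisk f)
    (hfD : ∀ z ∈ unitDisk, f z ∈ D) {r : ℝ} (hr : 0 < r) (hpd : pd 0 f 0 = r • v) :
    minMetric D (f 0) v ≤ 1 / r := by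
  refine csInf_le ⟨0, ?_⟩ ⟨r, hr, rfl, f, hf, hfD, rfl, hpd⟩
  rintro _ ⟨r, hr, rfl, -⟩
  positivity

lemma minMetric_smul (D : Set (Euc d)) (x v : Euc d) {c : ℝ} (hc : 0 < c) :
    minMetric D x (c • v) = c * minMetric D x v := by
  unfold minMetric
  rw [← smul_eq_mul, ← Real.sInf_smul_of_nonneg hc.le]
  congr 1
  ext y
  simp only [mem_smul_set, mem_ofPred_eq, smul_eq_mul]
  constructor
  · rintro ⟨r, hr, rfl, f, hf, hfD, hf0, hpd⟩
    exact ⟨1 / (r * c), ⟨r * c, by positivity, rfl, f, hf, hfD, hf0, by rw [hpd, smul_smul]⟩,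
      by field_simp⟩
  · rintro ⟨_, ⟨r, hr, rfl, f, hf, hfD, hf0, hpd⟩, rfl⟩
    refine ⟨r / c, by positivity, by field_simp, f, hf, hfD, hf0, ?_⟩
    rw [hpd, smul_smul, div_mul_cancel₀ _ hc.ne']

lemma minMetric_zero (D : Set (Euc d)) (x : Euc d) : minMetric D x 0 = 0 := by
  have h := minMetric_smul D x 0 two_pos
  rw [smul_zero] at h
  linarith

lemma fderiv_comp_neg (f : Euc 2 → Euc d) (z : Euc 2) :
    fderiv ℝ (fun z => f (-z)) z = -fderiv ℝ f (-z) := by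
  simpa using fderiv_comp_smul (f := f) (x := z) (-1 : ℝ)

lemma pd_comp_neg (i : Fin 2) (f : Euc 2 → Euc d) :
    pd i (fun z => f (-z)) = fun z => -pd i f (-z) := by
  funext z
  simp [pd, fderiv_comp_neg]

lemma ConformalHarmonicOnDisk.comp_neg {f : Euc 2 → Euc d} (hf : ConformalHarmonicOnDisk f) :
    ConformalHarmonicOnDisk fun z => f (-z) := by
  have hmem : ∀ z ∈ unitDisk, -z ∈ unitDisk := fun z hz => by simpa [unitDisk] using hz
  have hpd2 : ∀ i z, fderiv ℝ (fun z => -pd i f (-z)) z = fderiv ℝ (pd i f) (-z) := fun i z => by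
    rw [fderiv_fun_neg, fderiv_comp_neg, neg_neg]
  refine ⟨hf.1.comp contDiff_neg.contDiffOn hmem, fun z hz => ?_, fun z hz => ?_⟩
  · rw [pd_comp_neg, pd_comp_neg, hpd2, hpd2]
    exact hf.2.1 _ (hmem z hz)
  · rw [pd_comp_neg, pd_comp_neg]
    simpa using hf.2.2 _ (hmem z hz)

lemma minMetric_neg (D : Set (Euc d)) (x v : Euc d) :
    minMetric D x (-v) = minMetric D x v := by
  unfold minMetric
  congr 1
  ext c
  refine exists_congr fun r => and_congr_right fun _ => and_congr_right fun _ => ?_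
  constructor
  all_goals
    rintro ⟨f, hf, hfD, hf0, hpd⟩
    refine ⟨fun z => f (-z), hf.comp_neg, fun _ hz => hfD _ (by simpa [unitDisk] using hz),
      by simpa using hf0, ?_⟩
    simp [pd_comp_neg, hpd]

lemma minMetric_le_norm_div {Λ : Submodule ℝ (Euc d)} (hΛ : 2 ≤ Module.finrank ℝ Λ)
    (hv : v ∈ Λ) {ρ : ℝ} (hρ : 0 < ρ) (hD : flatBall Λ x ρ ⊆ D) :
    minMetric D x v ≤ ‖v‖ / ρ := by
  rcases eq_or_ne v 0 with rfl | hv0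
  · simp [minMetric_zero]
  · have hv_norm : 0 < ‖v‖ := norm_pos_iff.mpr hv0
    obtain ⟨f, hf, hfD, rfl, hpd⟩ := exists_conformalHarmonicOnDisk_of_flatBall_subset hΛ hv
      (r := ρ / ‖v‖) (by positivity) hρ (div_mul_cancel₀ _ hv_norm.ne').le hD
    simpa using minMetric_le_of_disk hf hfD (by positivity) hpd

lemma flatBall_top_subset {R : ℝ} (hD : ball x R ⊆ D) : flatBall ⊤ x R ⊆ D := fun _ hz =>
  hD (mem_ball_iff_norm.mpr hz.2)

lemma two_le_finrank_top (hd : 2 ≤ d) : 2 ≤ Module.finrank ℝ (⊤ : Submodule ℝ (Euc d)) := by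
  simpa using hd

lemma minMetric_eq_zero_of_plane {Λ : Submodule ℝ (Euc d)} (hΛ : 2 ≤ Module.finrank ℝ Λ)
    (hv : v ∈ Λ) (hD : ∀ y ∈ Λ, x + y ∈ D) : minMetric D x v = 0 := by
  have hlim : Tendsto (fun n : ℕ => ‖v‖ / ((n : ℝ) + 1)) atTop (nhds 0) := by
    simpa [div_eq_mul_one_div ‖v‖] using tendsto_one_div_add_atTop_nhds_zero_nat.const_mul ‖v‖
  refine le_antisymm (ge_of_tendsto' hlim fun n => ?_) (minMetric_nonneg D x v)
  exact minMetric_le_norm_div hΛ hv (by positivity)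
    (flatBall_subset_iff.mpr fun y hy _ => hD y hy)

/-- For `d < 2` no disk has a nonzero derivative, and the metric has the junk value `sInf ∅ = 0` at
`v ≠ 0`. -/
lemma abs_apply_div_le_minMetric (hd : 2 ≤ d) (hOpen : IsOpen D) {l : Euc d →L[ℝ] ℝ} {c : ℝ}
    (hl : ∀ y ∈ D, l y < c) (hx : x ∈ D) (v : Euc d) :
    |l v| / (2 * (c - l x)) ≤ minMetric D x v := by
  obtain ⟨R, hR, hball⟩ := Metric.isOpen_iff.mp hOpen x hx
  refine le_csInf ?_ ?_
  · have hr : R / (‖v‖ + 1) * ‖v‖ ≤ R := by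
      rw [div_mul_eq_mul_div, div_le_iff₀ (by positivity)]
      nlinarith
    exact ⟨_, R / (‖v‖ + 1), by positivity, rfl, exists_conformalHarmonicOnDisk_of_flatBall_subset
      (two_le_finrank_top hd) Submodule.mem_top (by positivity) hR hr (flatBall_top_subset hball)⟩
  · rintro _ ⟨r, hr, rfl, f, hf, hfD, rfl, hpd⟩
    have h := hf.abs_apply_pd_le fun z hz => hl _ (hfD z hz)
    rw [hpd, map_smul, smul_eq_mul, abs_mul, abs_of_pos hr] at h
    have hc : 0 < c - l (f 0) := sub_pos.mpr (hl _ hx)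
    rw [div_le_div_iff₀ (by positivity) hr]
    linarith

end MinMetric

/-! ### Piecewise smooth curves and the minimal distance -/

section PiecewiseC1

variable {d : ℕ} {γ : ℝ → Euc d} {a b : ℝ}

lemma piecewiseC1On_of_contDiff (hγ : ContDiff ℝ 1 γ) (hab : a ≤ b) : PiecewiseC1On γ a b := by
  refine ⟨hγ.continuous.continuousOn, 0, ![a, b], ?_, rfl, rfl, fun _ => hγ.contDiffOn⟩
  exact Fin.monotone_iff_le_succ.mpr fun i => by fin_cases i; exact hab

lemma PiecewiseC1On.mono (hγ : PiecewiseC1On γ a b) {a' b' : ℝ} (ha : a ≤ a') (hab' : a' ≤ b')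
    (hb : b' ≤ b) : PiecewiseC1On γ a' b' := by
  obtain ⟨hcont, n, t, ht, rfl, rfl, hC⟩ := hγ
  refine ⟨hcont.mono (Icc_subset_Icc ha hb), n, fun i => max a' (min b' (t i)),
    fun i j hij => max_le_max_left _ (min_le_min_left _ (ht hij)),
    max_eq_left ((min_le_right _ _).trans ha), by simp [min_eq_left hb, hab'], fun i => ?_⟩
  have hle : t i.castSucc ≤ t i.succ := ht (Fin.castSucc_le_succ i)
  rcases le_or_gt b' (t i.castSucc) with hb' | hb'
  · simp [min_eq_left hb', min_eq_left (hb'.trans hle), ContDiffOn, contDiffWithinAt_singleton]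
  rcases le_or_gt (t i.succ) a' with ha' | ha'
  · simp [max_eq_left ((min_le_right b' _).trans ha'),
      max_eq_left ((min_le_right b' _).trans (hle.trans ha')), ContDiffOn,
      contDiffWithinAt_singleton]
  refine (hC i).mono (Icc_subset_Icc ?_ (max_le ha'.le (min_le_right _ _)))
  exact (min_eq_right hb'.le).ge.trans (le_max_right _ _)

lemma PiecewiseC1On.comp_mul_add (hγ : PiecewiseC1On γ a b) {m : ℝ} (hm : 0 < m) (c : ℝ) :
    PiecewiseC1On (fun τ => γ (m * τ + c)) ((a - c) / m) ((b - c) / m) := by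
  obtain ⟨hcont, n, t, ht, rfl, rfl, hC⟩ := hγ
  have hmaps : ∀ p q : ℝ,
      MapsTo (fun τ => m * τ + c) (Icc ((p - c) / m) ((q - c) / m)) (Icc p q) := by
    rintro p q τ ⟨hp, hq⟩
    rw [div_le_iff₀' hm] at hp
    rw [le_div_iff₀' hm] at hq
    constructor <;> linarith
  refine ⟨hcont.comp (by fun_prop) (hmaps _ _), n, fun i => (t i - c) / m, fun i j hij => ?_,
    rfl, rfl, fun i => (hC i).comp (ContDiff.contDiffOn (by fun_prop)) (hmaps _ _)⟩
  have := ht hij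
  dsimp only
  gcongr

lemma PiecewiseC1On.comp_const_sub (hγ : PiecewiseC1On γ a b) (c : ℝ) :
    PiecewiseC1On (fun τ => γ (c - τ)) (c - b) (c - a) := by
  obtain ⟨hcont, n, t, ht, rfl, rfl, hC⟩ := hγ
  have hmaps : ∀ p q : ℝ, MapsTo (fun τ => c - τ) (Icc (c - q) (c - p)) (Icc p q) :=
    fun p q τ hτ => ⟨by linarith [hτ.2], by linarith [hτ.1]⟩
  refine ⟨hcont.comp (by fun_prop) (hmaps _ _), n, fun i => c - t i.rev,
    fun i j hij => sub_le_sub_left (ht (Fin.rev_le_rev.mpr hij)) c, by simp, by simp, fun i => ?_⟩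
  refine (hC i.rev).comp (ContDiff.contDiffOn (by fun_prop)) ?_
  rw [← Fin.rev_succ, ← Fin.rev_castSucc]
  exact hmaps _ _

end PiecewiseC1

section MinDist

open MeasureTheory

variable {d : ℕ} {D : Set (Euc d)} {γ : ℝ → Euc d} {x y : Euc d}

lemma exists_piecewiseC1On_of_convex (hConv : Convex ℝ D) (hx : x ∈ D) (hy : y ∈ D) :
    ∃ γ : ℝ → Euc d, PiecewiseC1On γ 0 1 ∧ (∀ t ∈ Icc (0 : ℝ) 1, γ t ∈ D) ∧ γ 0 = x ∧ γ 1 = y :=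
  ⟨fun t => x + t • (y - x), piecewiseC1On_of_contDiff (by fun_prop) zero_le_one,
    fun _ ht => hConv.add_smul_sub_mem hx hy ht, by simp, by simp⟩

lemma minDist_le_integral (hγ : PiecewiseC1On γ 0 1) (hγD : ∀ t ∈ Icc (0 : ℝ) 1, γ t ∈ D) :
    minDist D (γ 0) (γ 1) ≤ ∫ t in (0 : ℝ)..1, minMetric D (γ t) (deriv γ t) := by
  refine csInf_le ⟨0, ?_⟩ ⟨γ, hγ, hγD, rfl, rfl, rfl⟩
  rintro _ ⟨γ, -, -, -, -, rfl⟩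
  exact intervalIntegral.integral_nonneg zero_le_one fun t _ => minMetric_nonneg _ _ _

lemma minDist_nonneg (D : Set (Euc d)) (x y : Euc d) : 0 ≤ minDist D x y := by
  refine Real.sInf_nonneg ?_
  rintro _ ⟨γ, -, -, -, -, rfl⟩
  exact intervalIntegral.integral_nonneg zero_le_one fun t _ => minMetric_nonneg _ _ _

lemma minDist_comm (D : Set (Euc d)) (x y : Euc d) : minDist D x y = minDist D y x := by
  unfold minDist
  congr 1
  ext L
  constructor
  all_goals
    rintro ⟨γ, hγ, hγD, h0, h1, rfl⟩
    refine ⟨fun τ => γ (1 - τ), by simpa using hγ.comp_const_sub 1, fun t ht => hγD _ ?_,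
      by simpa using h1, by simpa using h0, ?_⟩
    · exact ⟨by linarith [ht.2], by linarith [ht.1]⟩
    · simp only [deriv_comp_const_sub, minMetric_neg]
      rw [intervalIntegral.integral_comp_sub_left (fun s => minMetric D (γ s) (deriv γ s))]
      simp

lemma minDist_le_integral_subcurve (hγ : PiecewiseC1On γ 0 1)
    (hγD : ∀ t ∈ Icc (0 : ℝ) 1, γ t ∈ D) {a b : ℝ} (ha : 0 ≤ a) (hab : a < b) (hb : b ≤ 1) :
    minDist D (γ a) (γ b) ≤ ∫ t in a..b, minMetric D (γ t) (deriv γ t) := by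
  have hba : 0 < b - a := sub_pos.mpr hab
  have hsub : PiecewiseC1On (fun τ => γ ((b - a) * τ + a)) 0 1 := by
    simpa [hba.ne'] using (hγ.mono ha hab.le hb).comp_mul_add hba a
  have h := minDist_le_integral (D := D) hsub fun t ht => hγD _
    ⟨by nlinarith [ht.1], by nlinarith [ht.2]⟩
  have hderiv : ∀ τ, deriv (fun τ => γ ((b - a) * τ + a)) τ
      = (b - a) • deriv γ ((b - a) * τ + a) := fun τ => by
    rw [deriv_comp_mul_left (b - a) (fun s => γ (s + a)) τ, deriv_comp_add_const]
  simp only [hderiv, minMetric_smul _ _ _ hba, intervalIntegral.integral_const_mul] at h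
  rw [intervalIntegral.integral_comp_mul_add (fun s => minMetric D (γ s) (deriv γ s)) hba.ne' a,
    smul_eq_mul, mul_inv_cancel_left₀ hba.ne'] at h
  simpa using h

/-- If the speed along the segment is not integrable, its length is the junk value `0`, and the
bound still holds. -/
lemma minDist_le_of_segment (hConv : Convex ℝ D) (hx : x ∈ D) (hy : y ∈ D) {C : ℝ}
    (hC : ∀ t ∈ Icc (0 : ℝ) 1, minMetric D (x + t • (y - x)) (y - x) ≤ C) :
    minDist D x y ≤ C := by
  have hlen := minDist_le_integral (D := D) (γ := fun t => x + t • (y - x))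
    (piecewiseC1On_of_contDiff (by fun_prop) zero_le_one)
    (fun _ ht => hConv.add_smul_sub_mem hx hy ht)
  have hderiv : ∀ t, deriv (fun t : ℝ => x + t • (y - x)) t = y - x := fun t => by
    simpa using (((hasDerivAt_id t).smul_const (y - x)).const_add x).deriv
  simp only [hderiv, zero_smul, add_zero, one_smul, add_sub_cancel] at hlen
  have hbound := intervalIntegral.norm_integral_le_of_norm_le_const (a := 0) (b := 1) (C := C)
    (f := fun t => minMetric D (x + t • (y - x)) (y - x)) fun t ht => by
      rw [uIoc_of_le zero_le_one] at ht
      rw [Real.norm_of_nonneg (minMetric_nonneg _ _ _)]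
      exact hC t ⟨ht.1.le, ht.2⟩
  exact hlen.trans ((le_abs_self _).trans (by simpa using hbound))

/-- A non-integrable speed would give the curve the junk length `0`, forcing the distance of its
endpoints to vanish. -/
lemma MinHyperbolic.intervalIntegrable (hHyp : MinHyperbolic D) (hγ : PiecewiseC1On γ 0 1)
    (hγD : ∀ t ∈ Icc (0 : ℝ) 1, γ t ∈ D) (hne : γ 0 ≠ γ 1) :
    IntervalIntegrable (fun t => minMetric D (γ t) (deriv γ t)) volume 0 1 := by
  by_contra h
  have hlen := minDist_le_integral hγ hγD
  rw [intervalIntegral.integral_undef h] at hlen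
  exact hlen.not_gt (hHyp _ (hγD 0 (by simp)) _ (hγD 1 (by simp)) hne)

section Lipschitz

variable {g : Euc d → ℝ} (hg : ∀ x ∈ D, DifferentiableAt ℝ g x)
  (hle : ∀ x ∈ D, ∀ v, fderiv ℝ g x v ≤ minMetric D x v)

include hg hle

lemma sub_le_integral_of_contDiffOn {a b : ℝ} (hab : a ≤ b) (hγ : ContDiffOn ℝ 1 γ (Icc a b))
    (hγD : ∀ t ∈ Icc a b, γ t ∈ D)
    (hInt : IntervalIntegrable (fun t => minMetric D (γ t) (deriv γ t)) volume a b) :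
    g (γ b) - g (γ a) ≤ ∫ t in a..b, minMetric D (γ t) (deriv γ t) := by
  refine intervalIntegral.sub_le_integral_of_hasDeriv_right_of_le (g := g ∘ γ)
    (g' := fun s => fderiv ℝ g (γ s) (deriv γ s)) hab ?_ (fun s hs => ?_)
    ((intervalIntegrable_iff_integrableOn_Icc_of_le hab).mp hInt)
    fun s hs => hle _ (hγD s (Ioo_subset_Icc_self hs)) _
  · exact fun s hs => (hg _ (hγD s hs)).continuousAt.comp_continuousWithinAt
      (hγ.continuousOn s hs)
  · have hγs : HasDerivAt γ (deriv γ s) s :=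
      ((hγ.contDiffAt (Icc_mem_nhds hs.1 hs.2)).differentiableAt one_ne_zero).hasDerivAt
    exact ((hg _ (hγD s (Ioo_subset_Icc_self hs))).hasFDerivAt.comp_hasDerivAt s
      hγs).hasDerivWithinAt

lemma PiecewiseC1On.sub_le_integral {a b : ℝ} (hγ : PiecewiseC1On γ a b)
    (hγD : ∀ t ∈ Icc a b, γ t ∈ D)
    (hInt : IntervalIntegrable (fun t => minMetric D (γ t) (deriv γ t)) volume a b) :
    g (γ b) - g (γ a) ≤ ∫ t in a..b, minMetric D (γ t) (deriv γ t) := by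
  obtain ⟨-, n, t, ht, rfl, rfl, hC⟩ := hγ
  have hmem : ∀ i, t i ∈ Icc (t 0) (t (Fin.last (n + 1))) := fun i =>
    ⟨ht (Fin.zero_le i), ht (Fin.le_last i)⟩
  have hInt_sub : ∀ i j, IntervalIntegrable (fun s => minMetric D (γ s) (deriv γ s)) volume
      (t i) (t j) := fun i j =>
    hInt.mono_set ((uIcc_subset_Icc (hmem i) (hmem j)).trans Icc_subset_uIcc)
  have hpartial : ∀ j, g (γ (t j)) - g (γ (t 0))
      ≤ ∫ s in t 0..t j, minMetric D (γ s) (deriv γ s) := by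
    intro j
    induction j using Fin.induction with
    | zero => simp
    | succ i ih =>
      have hpiece := sub_le_integral_of_contDiffOn hg hle (ht (Fin.castSucc_le_succ i)) (hC i)
        (fun s hs => hγD s (Icc_subset_Icc (hmem _).1 (hmem _).2 hs)) (hInt_sub _ _)
      rw [← intervalIntegral.integral_add_adjacent_intervals (hInt_sub 0 i.castSucc)
        (hInt_sub i.castSucc i.succ)]
      linarith
  exact hpartial (Fin.last (n + 1))

lemma MinHyperbolic.sub_le_minDist (hHyp : MinHyperbolic D) (hConv : Convex ℝ D) (hx : x ∈ D)
    (hy : y ∈ D) : g y - g x ≤ minDist D x y := by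
  rcases eq_or_ne x y with rfl | hne
  · simpa using minDist_nonneg D x x
  refine le_csInf ?_ ?_
  · obtain ⟨γ, hγ, hγD, h0, h1⟩ := exists_piecewiseC1On_of_convex hConv hx hy
    exact ⟨_, γ, hγ, hγD, h0, h1, rfl⟩
  · rintro _ ⟨γ, hγ, hγD, rfl, rfl, rfl⟩
    exact hγ.sub_le_integral hg hle hγD (hHyp.intervalIntegrable hγ hγD hne)

lemma MinHyperbolic.abs_sub_le_minDist (hHyp : MinHyperbolic D) (hConv : Convex ℝ D)
    (hx : x ∈ D) (hy : y ∈ D) : |g x - g y| ≤ minDist D x y :=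
  abs_sub_le_iff.mpr ⟨minDist_comm D x y ▸ hHyp.sub_le_minDist hg hle hConv hy hx,
    hHyp.sub_le_minDist hg hle hConv hx hy⟩

end Lipschitz

/-- Half the logarithm of the gap `c - l x` between `x` and the hyperplane `{l = c}`: a
`1`-Lipschitz function for the minimal distance of any domain in `{l < c}`. -/
def logGap (l : Euc d →L[ℝ] ℝ) (c : ℝ) (x : Euc d) : ℝ :=
  Real.log (c - l x) / 2

lemma hasFDerivAt_logGap {l : Euc d →L[ℝ] ℝ} {c : ℝ} (hx : l x < c) :
    HasFDerivAt (logGap l c) ((2 : ℝ)⁻¹ • ((c - l x)⁻¹ • -l)) x := by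
  have h := ((l.hasFDerivAt.const_sub c).log (sub_pos.mpr hx).ne').const_mul (2 : ℝ)⁻¹
  exact h.congr_of_eventuallyEq (Eventually.of_forall fun y => div_eq_inv_mul _ _)

lemma continuousOn_logGap {l : Euc d →L[ℝ] ℝ} {c : ℝ} (hl : ∀ x ∈ D, l x < c) :
    ContinuousOn (logGap l c) D := fun x hx =>
  (hasFDerivAt_logGap (hl x hx)).continuousAt.continuousWithinAt

lemma abs_logGap_sub_le_minDist (hd : 2 ≤ d) (hOpen : IsOpen D) (hConv : Convex ℝ D)
    (hHyp : MinHyperbolic D) {l : Euc d →L[ℝ] ℝ} {c : ℝ} (hl : ∀ x ∈ D, l x < c) (hx : x ∈ D)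
    (hy : y ∈ D) : |logGap l c x - logGap l c y| ≤ minDist D x y := by
  refine hHyp.abs_sub_le_minDist (fun z hz => (hasFDerivAt_logGap (hl z hz)).differentiableAt)
    (fun z hz v => ?_) hConv hx hy
  have hpos : 0 < c - l z := sub_pos.mpr (hl z hz)
  calc fderiv ℝ (logGap l c) z v = -l v / (2 * (c - l z)) := by
        rw [(hasFDerivAt_logGap (hl z hz)).fderiv]
        simp only [smul_apply, neg_apply, smul_eq_mul]
        field_simp
    _ ≤ |l v| / (2 * (c - l z)) := by
        gcongr
        exact neg_le_abs _
    _ ≤ minMetric D z v := abs_apply_div_le_minMetric hd hOpen hl hz v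

lemma exists_integral_lt_minDist_add (hConv : Convex ℝ D) (hx : x ∈ D) (hy : y ∈ D) {ε : ℝ}
    (hε : 0 < ε) : ∃ γ : ℝ → Euc d, PiecewiseC1On γ 0 1 ∧ (∀ t ∈ Icc (0 : ℝ) 1, γ t ∈ D) ∧
      γ 0 = x ∧ γ 1 = y ∧ ∫ t in (0 : ℝ)..1, minMetric D (γ t) (deriv γ t) < minDist D x y + ε := by
  obtain ⟨γ, hγ, hγD, h0, h1⟩ := exists_piecewiseC1On_of_convex hConv hx hy
  have hnonempty : Set.Nonempty {L : ℝ | ∃ γ : ℝ → Euc d, PiecewiseC1On γ 0 1 ∧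
      (∀ t ∈ Icc (0 : ℝ) 1, γ t ∈ D) ∧ γ 0 = x ∧ γ 1 = y ∧
      L = ∫ t in (0 : ℝ)..1, minMetric D (γ t) (deriv γ t)} := ⟨_, γ, hγ, hγD, h0, h1, rfl⟩
  obtain ⟨_, ⟨γ, hγ, hγD, h0, h1, rfl⟩, hlt⟩ := exists_lt_of_csInf_lt hnonempty
    (lt_add_of_pos_right (minDist D x y) hε)
  exact ⟨γ, hγ, hγD, h0, h1, hlt⟩

/-- Every point `o` of an almost length-minimizing curve from `x` to `y` has small Gromov product
`(x|y)_o`. -/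
lemma MinHyperbolic.exists_eq_and_gromovProd_le (hHyp : MinHyperbolic D) (hConv : Convex ℝ D)
    (hx : x ∈ D) (hy : y ∈ D) {φ : Euc d → ℝ} (hφ : ContinuousOn φ D) {h ε : ℝ}
    (hh : h ∈ Ioo (φ y) (φ x)) (hε : 0 < ε) : ∃ o ∈ D, φ o = h ∧ gromovProd D o x y ≤ ε := by
  have hne : x ≠ y := by
    rintro rfl
    exact lt_irrefl _ (hh.1.trans hh.2)
  obtain ⟨γ, hγ, hγD, rfl, rfl, hlt⟩ :=
    exists_integral_lt_minDist_add hConv hx hy (mul_pos two_pos hε)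
  have hInt := hHyp.intervalIntegrable hγ hγD hne
  obtain ⟨t, ht, hφt⟩ := intermediate_value_Ioo' zero_le_one (hφ.comp hγ.1 hγD) hh
  have htI : t ∈ Icc (0 : ℝ) 1 := Ioo_subset_Icc_self ht
  refine ⟨γ t, hγD t htI, hφt, ?_⟩
  have hleft := minDist_le_integral_subcurve hγ hγD le_rfl ht.1 ht.2.le
  have hright := minDist_le_integral_subcurve hγ hγD ht.1.le ht.2 le_rfl
  have hadd := intervalIntegral.integral_add_adjacent_intervals
    (hInt.mono_set ((uIcc_subset_Icc (left_mem_Icc.mpr zero_le_one) htI).trans Icc_subset_uIcc))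
    (hInt.mono_set ((uIcc_subset_Icc htI (right_mem_Icc.mpr zero_le_one)).trans Icc_subset_uIcc))
  unfold gromovProd
  rw [minDist_comm D (γ 1) (γ t)]
  linarith

end MinDist

/-! ### Chains in Gromov hyperbolic spaces -/

section Gromov

variable {X : Type*} {ρ : X → X → ℝ} {δ K M : ℝ} {S : Set X} {o : X}

/-- The Gromov product `(x|y)_o` of an arbitrary two-point function `ρ`. -/
def gromovProduct (ρ : X → X → ℝ) (o x y : X) : ℝ :=
  (ρ x o + ρ y o - ρ x y) / 2

/-- Gromov's four-point inequality with constant `δ` for points of `S`, where `ρ` is any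
two-point function and `δ` any real number. -/
def FourPointOn (ρ : X → X → ℝ) (δ : ℝ) (S : Set X) : Prop :=
  ∀ x ∈ S, ∀ y ∈ S, ∀ z ∈ S, ∀ o ∈ S,
    min (gromovProduct ρ o x z) (gromovProduct ρ o y z) - δ ≤ gromovProduct ρ o x y

lemma gromovProduct_comm (hρ : ∀ x y, ρ x y = ρ y x) (o x y : X) :
    gromovProduct ρ o x y = gromovProduct ρ o y x := by
  rw [gromovProduct, gromovProduct, hρ x y, add_comm (ρ x o)]

lemma FourPointOn.sub_le_gromovProduct (hS : FourPointOn ρ δ S) (hρ : ∀ x y, ρ x y = ρ y x)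
    {x y z : X} (hx : x ∈ S) (hy : y ∈ S) (hz : z ∈ S) (ho : o ∈ S)
    (hxy : M ≤ gromovProduct ρ o x y) (hyz : M ≤ gromovProduct ρ o y z) :
    M - δ ≤ gromovProduct ρ o x z :=
  (sub_le_sub_right (le_min hxy (gromovProduct_comm hρ o y z ▸ hyz)) δ).trans
    (hS x hx z hz y hy o ho)

/-- Bisecting the chain loses `δ` per generation, hence only the logarithm of its length. -/
lemma FourPointOn.sub_le_gromovProduct_of_chain (hS : FourPointOn ρ δ S)
    (hρ : ∀ x y, ρ x y = ρ y x) (ho : o ∈ S) (k : ℕ) {x : ℕ → X} (hx : ∀ i ≤ 2 ^ k, x i ∈ S)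
    (hstep : ∀ i < 2 ^ k, ρ (x i) (x (i + 1)) ≤ K) (hfar : ∀ i ≤ 2 ^ k, M ≤ ρ (x i) o) :
    M - K / 2 - k * δ ≤ gromovProduct ρ o (x 0) (x (2 ^ k)) := by
  induction k generalizing x with
  | zero =>
    have hstart := hfar 0 (by simp)
    have hend := hfar 1 (by simp)
    have hleg := hstep 0 (by simp)
    rw [zero_add] at hleg
    simp only [pow_zero, gromovProduct, Nat.cast_zero, zero_mul]
    linarith
  | succ k ih =>
    have hdouble : 2 ^ (k + 1) = 2 ^ k + 2 ^ k := by ring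
    have hleft := ih (x := x) (fun i hi => hx i (by lia)) (fun i hi => hstep i (by lia))
      (fun i hi => hfar i (by lia))
    have hright := ih (x := fun i => x (2 ^ k + i)) (fun i hi => hx _ (by lia))
      (fun i hi => hstep (2 ^ k + i) (by lia)) (fun i hi => hfar _ (by lia))
    rw [add_zero, ← hdouble] at hright
    have hjoin := hS.sub_le_gromovProduct hρ (hx 0 (Nat.zero_le _)) (hx (2 ^ k) (by lia))
      (hx (2 ^ (k + 1)) le_rfl) ho hleft hright
    push_cast
    linarith

lemma FourPointOn.exists_lt_of_two_chains (hS : FourPointOn ρ δ S) (hρ : ∀ x y, ρ x y = ρ y x)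
    (ho : o ∈ S) (k : ℕ) {x y : ℕ → X} (hx : ∀ i ≤ 2 ^ k, x i ∈ S) (hy : ∀ i ≤ 2 ^ k, y i ∈ S)
    (hxy : x (2 ^ k) = y 0) (hxstep : ∀ i < 2 ^ k, ρ (x i) (x (i + 1)) ≤ K)
    (hystep : ∀ i < 2 ^ k, ρ (y i) (y (i + 1)) ≤ K)
    (hprod : gromovProduct ρ o (x 0) (y (2 ^ k)) < M - K / 2 - (k + 1) * δ) :
    (∃ i ≤ 2 ^ k, ρ (x i) o < M) ∨ ∃ i ≤ 2 ^ k, ρ (y i) o < M := by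
  by_contra! h
  have hleft := hS.sub_le_gromovProduct_of_chain hρ ho k hx hxstep h.1
  have hright := hS.sub_le_gromovProduct_of_chain hρ ho k hy hystep h.2
  rw [← hxy] at hright
  have hjoin := hS.sub_le_gromovProduct hρ (hx 0 (Nat.zero_le _)) (hx _ le_rfl) (hy _ le_rfl) ho
    hleft hright
  linarith

/-- A point `o` nearly between two opposite corners of a grid is close to both pairs of adjacent
sides; if it is far from the sides `j = 0` and `j = 2 ^ k`, it is close to the other two. -/
lemma FourPointOn.exists_lt_and_exists_lt_of_grid (hS : FourPointOn ρ δ S)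
    (hρ : ∀ x y, ρ x y = ρ y x) (ho : o ∈ S) (k : ℕ) {P : ℕ → ℕ → X} (hP : ∀ i j, P i j ∈ S)
    (hfst : ∀ i j, ρ (P i j) (P (i + 1) j) ≤ K) (hsnd : ∀ i j, ρ (P i j) (P i (j + 1)) ≤ K)
    (hbot : ∀ i, M ≤ ρ (P i 0) o) (htop : ∀ i, M ≤ ρ (P i (2 ^ k)) o)
    (hprod : gromovProduct ρ o (P 0 0) (P (2 ^ k) (2 ^ k)) < M - K / 2 - (k + 1) * δ) :
    (∃ j ≤ 2 ^ k, ρ (P 0 j) o < M) ∧ ∃ j ≤ 2 ^ k, ρ (P (2 ^ k) j) o < M := by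
  constructor
  · refine (hS.exists_lt_of_two_chains hρ ho k (x := P 0) (y := fun i => P i (2 ^ k))
      (fun _ _ => hP _ _) (fun _ _ => hP _ _) rfl (fun _ _ => hsnd _ _) (fun _ _ => hfst _ _)
      hprod).resolve_right ?_
    rintro ⟨i, -, hi⟩
    exact (htop i).not_gt hi
  · refine (hS.exists_lt_of_two_chains hρ ho k (x := fun i => P i 0) (y := P (2 ^ k))
      (fun _ _ => hP _ _) (fun _ _ => hP _ _) rfl (fun _ _ => hfst _ _) (fun _ _ => hsnd _ _)
      hprod).resolve_left ?_
    rintro ⟨i, -, hi⟩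
    exact (hbot i).not_gt hi

end Gromov

lemma exists_add_mul_le_two_pow (a b : ℝ) : ∃ k : ℕ, a + b * k ≤ 2 ^ k := by
  have hconst : (fun _ : ℕ => a) =o[atTop] fun k : ℕ => (2 : ℝ) ^ k :=
    Asymptotics.isLittleO_const_left.mpr <| .inr <|
      tendsto_norm_atTop_atTop.comp (tendsto_pow_atTop_atTop_of_one_lt one_lt_two)
  have hlin : (fun k : ℕ => b * (k : ℝ)) =o[atTop] fun k : ℕ => (2 : ℝ) ^ k :=
    (isLittleO_coe_const_pow_of_one_lt one_lt_two).const_mul_left b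
  obtain ⟨k, hk⟩ := ((hconst.add hlin).bound one_pos).exists
  exact ⟨k, (le_abs_self _).trans (by simpa using hk)⟩

/-! ### The cone over a corner of a face -/

section ConvexClosure

variable {E : Type*} [NormedAddCommGroup E] [InnerProductSpace ℝ E] {D : Set E}
  {Λ : Submodule ℝ E} {o u : E} {s r : ℝ}

lemma combo_mem (hOpen : IsOpen D) (hConv : Convex ℝ D) (hu : u ∈ closure D) (ho : o ∈ D)
    (hs : 0 < s) (hs1 : s ≤ 1) : (1 - s) • u + s • o ∈ D := by
  have h := hConv.combo_interior_closure_mem_interior (by rwa [hOpen.interior_eq]) hu hs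
    (sub_nonneg.mpr hs1) (add_sub_cancel s 1)
  rwa [hOpen.interior_eq, add_comm] at h

lemma flatBall_combo_subset {A B : Set E} (hs : 0 < s) (hA : flatBall Λ o r ⊆ A)
    (hAB : ∀ q ∈ A, (1 - s) • u + s • q ∈ B) : flatBall Λ ((1 - s) • u + s • o) (s * r) ⊆ B := by
  refine flatBall_subset_iff.mpr fun y hy hyr => ?_
  have hq : o + s⁻¹ • y ∈ A := by
    refine flatBall_subset_iff.mp hA _ (Λ.smul_mem _ hy) ?_
    rwa [norm_smul, norm_inv, Real.norm_of_nonneg hs.le, inv_mul_lt_iff₀ hs]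
  convert hAB _ hq using 1
  rw [smul_add, smul_inv_smul₀ hs.ne', add_assoc]

end ConvexClosure

section Cone

variable {d : ℕ} {D : Set (Euc d)} {Λ : Submodule ℝ (Euc d)} {ξ v o u : Euc d} {a s r T : ℝ}

/-- The cone from `u` over a ball around `o` contains balls of radius proportional to the height
`s`. -/
lemma minDist_combo_half_le (hd : 2 ≤ d) (hOpen : IsOpen D) (hConv : Convex ℝ D)
    (hu : u ∈ closure D) (hr : 0 < r) (hball : ball o r ⊆ D) (hs : 0 < s) (hs1 : s ≤ 1) :
    minDist D ((1 - s) • u + s • o) ((1 - s / 2) • u + (s / 2) • o) ≤ ‖u - o‖ / r := by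
  have ho : o ∈ D := hball (mem_ball_self hr)
  refine minDist_le_of_segment hConv (combo_mem hOpen hConv hu ho hs hs1)
    (combo_mem hOpen hConv hu ho (by positivity) (by linarith)) fun t ht => ?_
  have hvel : (1 - s / 2) • u + (s / 2) • o - ((1 - s) • u + s • o) = (s / 2) • (u - o) := by
    module
  obtain ⟨σ, hσ⟩ : ∃ σ, σ = s - t * (s / 2) := ⟨_, rfl⟩
  have hpt : (1 - s) • u + s • o + t • (s / 2) • (u - o) = (1 - σ) • u + σ • o := by
    rw [hσ]
    module
  have hσs : s / 2 ≤ σ := by nlinarith [ht.2]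
  have hσ1 : σ ≤ 1 := by nlinarith [ht.1]
  have hσ0 : 0 < σ := by linarith
  have hflat : flatBall ⊤ ((1 - σ) • u + σ • o) (σ * r) ⊆ D :=
    flatBall_combo_subset hσ0 (flatBall_top_subset hball)
      fun q hq => combo_mem hOpen hConv hu hq hσ0 hσ1
  rw [hvel, hpt]
  calc minMetric D ((1 - σ) • u + σ • o) ((s / 2) • (u - o))
      ≤ ‖(s / 2) • (u - o)‖ / (σ * r) :=
        minMetric_le_norm_div (two_le_finrank_top hd) Submodule.mem_top (by positivity) hflat
    _ ≤ s / 2 * ‖u - o‖ / (s / 2 * r) := by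
        rw [norm_smul, Real.norm_of_nonneg (by positivity)]
        gcongr
    _ = ‖u - o‖ / r := mul_div_mul_left _ _ (by positivity)

/-- The point at height `s` on the segment from the point `ξ + a • v` of a face (`s = 0`) to the
interior point `o` (`s = 1`). -/
def conePt (ξ v o : Euc d) (a s : ℝ) : Euc d :=
  (1 - s) • (ξ + a • v) + s • o

lemma conePt_mem (hOpen : IsOpen D) (hConv : Convex ℝ D) (hξ : ξ ∈ closure D)
    (hv : ξ + v ∈ closure D) (ho : o ∈ D) (ha : a ∈ Icc 0 1) (hs : 0 < s) (hs1 : s ≤ 1) :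
    conePt ξ v o a s ∈ D :=
  combo_mem hOpen hConv (hConv.closure.add_smul_mem hξ hv ha) ho hs hs1

lemma minDist_conePt_half_height_le (hd : 2 ≤ d) (hOpen : IsOpen D) (hConv : Convex ℝ D)
    (hξ : ξ ∈ closure D) (hv : ξ + v ∈ closure D) (hr : 0 < r) (hball : ball o r ⊆ D)
    (ha : a ∈ Icc 0 1) (hs : 0 < s) (hs1 : s ≤ 1) :
    minDist D (conePt ξ v o a s) (conePt ξ v o a (s / 2)) ≤ (‖ξ - o‖ + ‖v‖) / r := by
  refine (minDist_combo_half_le hd hOpen hConv (hConv.closure.add_smul_mem hξ hv ha) hr hball hs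
    hs1).trans ?_
  gcongr
  calc ‖ξ + a • v - o‖ = ‖(ξ - o) + a • v‖ := by rw [add_sub_right_comm]
    _ ≤ ‖ξ - o‖ + ‖a • v‖ := norm_add_le _ _
    _ ≤ ‖ξ - o‖ + ‖v‖ := by
        gcongr
        rw [norm_smul, Real.norm_of_nonneg ha.1]
        exact mul_le_of_le_one_left (norm_nonneg v) ha.2

lemma flatBall_conePt_subset (hOpen : IsOpen D) (hConv : Convex ℝ D) (hξ : ξ ∈ closure D)
    (hflat : flatBall Λ (ξ + v) r ⊆ closure D) (ho : o ∈ D) (ha : a ∈ Ioc 0 1) (hs : s ∈ Ioo 0 1) :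
    flatBall Λ (conePt ξ v o a s) ((1 - s) * (a * r)) ⊆ D := by
  have hbase : flatBall Λ (ξ + a • v) (a * r) ⊆ closure D := by
    have h := flatBall_combo_subset (u := ξ) (B := closure D) ha.1 hflat fun q hq =>
      hConv.closure hξ hq (sub_nonneg.mpr ha.2) ha.1.le (sub_add_cancel 1 a)
    convert h using 2
    module
  have h := flatBall_combo_subset (u := o) (B := D) (sub_pos.mpr hs.2) hbase fun q hq => by
    rw [sub_sub_cancel, add_comm]
    exact combo_mem hOpen hConv hq ho hs.1 hs.2.le
  rwa [sub_sub_cancel, add_comm] at h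

/-- By convexity, shrinking the flat ball around `ξ + v` towards `ξ` gives flat balls of radius
proportional to `a`. -/
lemma minDist_conePt_half_le (hΛ : 2 ≤ Module.finrank ℝ Λ) (hvΛ : v ∈ Λ) (hOpen : IsOpen D)
    (hConv : Convex ℝ D) (hξ : ξ ∈ closure D) (hr : 0 < r)
    (hflat : flatBall Λ (ξ + v) r ⊆ closure D) (ho : o ∈ D) (ha : a ∈ Ioc 0 1)
    (hs : s ∈ Ioo 0 1) :
    minDist D (conePt ξ v o a s) (conePt ξ v o (a / 2) s) ≤ ‖v‖ / r := by
  obtain ⟨ha0, ha1⟩ := ha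
  have hs' : 0 < 1 - s := sub_pos.mpr hs.2
  have hball : ∀ b ∈ Ioc (0 : ℝ) 1, flatBall Λ (conePt ξ v o b s) ((1 - s) * (b * r)) ⊆ D :=
    fun b hb => flatBall_conePt_subset hOpen hConv hξ hflat ho hb hs
  have hmem : ∀ b ∈ Ioc (0 : ℝ) 1, conePt ξ v o b s ∈ D := fun b hb => by
    simpa using flatBall_subset_iff.mp (hball b hb) 0 Λ.zero_mem
      (by simpa using mul_pos hs' (mul_pos hb.1 hr))
  refine minDist_le_of_segment hConv (hmem a ⟨ha0, ha1⟩)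
    (hmem (a / 2) ⟨by positivity, by linarith⟩) fun t ht => ?_
  have hvel : conePt ξ v o (a / 2) s - conePt ξ v o a s = -(((1 - s) * (a / 2)) • v) := by
    simp only [conePt]
    module
  obtain ⟨b, hb⟩ : ∃ b, b = a - t * (a / 2) := ⟨_, rfl⟩
  have hpt : conePt ξ v o a s + t • -(((1 - s) * (a / 2)) • v) = conePt ξ v o b s := by
    simp only [conePt, hb]
    module
  have hab : a / 2 ≤ b := by nlinarith [ht.2]
  have hb1 : b ≤ 1 := by nlinarith [ht.1]
  have hb0 : 0 < b := by linarith
  rw [hvel, hpt, minMetric_neg]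
  calc minMetric D (conePt ξ v o b s) (((1 - s) * (a / 2)) • v)
      ≤ ‖((1 - s) * (a / 2)) • v‖ / ((1 - s) * (b * r)) :=
        minMetric_le_norm_div hΛ (Λ.smul_mem _ hvΛ) (by positivity) (hball b ⟨hb0, hb1⟩)
    _ ≤ (1 - s) * (a / 2) * ‖v‖ / ((1 - s) * (a / 2 * r)) := by
        rw [norm_smul, Real.norm_of_nonneg (by positivity)]
        gcongr
    _ = ‖v‖ / r := by rw [← mul_assoc (1 - s), mul_div_mul_left _ _ (by positivity)]

/-- The separating hyperplane of `ξ - α • v`: its distance to `ξ + a • v` is comparable to a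
multiple of `a` for `a ∈ [α, 1]`, and heights up to a small `T` do not disturb this. -/
lemma exists_separating_functional (hConv : Convex ℝ D) (hξ : ξ ∈ closure D) (ho : o ∈ D) {α : ℝ}
    (hα : 0 < α) (hexit : ξ - α • v ∉ closure D) :
    ∃ (l : Euc d →L[ℝ] ℝ) (c : ℝ), (∀ x ∈ D, l x < c) ∧ ∃ T ∈ Ioc (0 : ℝ) (1 / 2),
      ∀ s ∈ Ioc 0 T, ∀ s' ∈ Ioc 0 T,
        c - l (conePt ξ v o α s') ≤ 6 * α * (c - l (conePt ξ v o 1 s)) := by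
  obtain ⟨l, c, hl, hc⟩ := geometric_hahn_banach_closed_point hConv.closure isClosed_closure hexit
  simp only [map_sub, map_smul, smul_eq_mul] at hc
  have hlξ : 0 < c - l ξ := sub_pos.mpr (hl ξ hξ)
  have hlo : 0 < c - l o := sub_pos.mpr (hl o (subset_closure ho))
  have hslope : 0 < α * -l v := by linarith
  have hlv : 0 < -l v := pos_of_mul_pos_right hslope hα.le
  have hgap : ∀ a s, c - l (conePt ξ v o a s)
      = (1 - s) * (c - l ξ + a * -l v) + s * (c - l o) := fun a s => by
    simp only [conePt, map_add, map_smul, smul_eq_mul]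
    ring
  refine ⟨l, c, fun x hx => hl x (subset_closure hx), min (1 / 2) (α * -l v / (c - l o)),
    ⟨by positivity, min_le_left _ _⟩, fun s ⟨hs, hsT⟩ s' ⟨hs', hsT'⟩ => ?_⟩
  rw [le_min_iff] at hsT hsT'
  have hheight : s' * (c - l o) ≤ α * -l v := (le_div_iff₀ hlo).mp hsT'.2
  have hlower : -l v / 2 ≤ c - l (conePt ξ v o 1 s) := by
    rw [hgap]
    have hbase : 1 / 2 * -l v ≤ (1 - s) * (c - l ξ + 1 * -l v) :=
      mul_le_mul (by linarith [hsT.1]) (by linarith) hlv.le (by linarith [hsT.1])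
    linarith [mul_pos hs hlo]
  calc c - l (conePt ξ v o α s') ≤ 3 * (α * -l v) := by
        rw [hgap]
        have hbase : (1 - s') * (c - l ξ + α * -l v) ≤ c - l ξ + α * -l v :=
          mul_le_of_le_one_left (by positivity) (by linarith)
        linarith
    _ = 6 * α * (-l v / 2) := by ring
    _ ≤ 6 * α * (c - l (conePt ξ v o 1 s)) := by gcongr

/-- The dyadic grid in the cone that looks like a square lattice in the coordinates
`(log a, log s)`. -/
def coneGrid (ξ v o : Euc d) (T : ℝ) (i j : ℕ) : Euc d :=
  conePt ξ v o ((1 / 2) ^ i) (T * (1 / 2) ^ j)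

lemma half_pow_mem_Ioc (i : ℕ) : (1 / 2 : ℝ) ^ i ∈ Ioc (0 : ℝ) 1 :=
  ⟨by positivity, pow_le_one₀ (by norm_num) (by norm_num)⟩

lemma mul_half_pow_mem_Ioc (hT : 0 < T) (j : ℕ) : T * (1 / 2) ^ j ∈ Ioc 0 T :=
  ⟨mul_pos hT (half_pow_mem_Ioc j).1, mul_le_of_le_one_right hT.le (half_pow_mem_Ioc j).2⟩

lemma coneGrid_mem (hOpen : IsOpen D) (hConv : Convex ℝ D) (hξ : ξ ∈ closure D)
    (hv : ξ + v ∈ closure D) (ho : o ∈ D) (hT : T ∈ Ioc 0 1) (i j : ℕ) :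
    coneGrid ξ v o T i j ∈ D :=
  conePt_mem hOpen hConv hξ hv ho (Ioc_subset_Icc_self (half_pow_mem_Ioc i))
    (mul_half_pow_mem_Ioc hT.1 j).1 ((mul_half_pow_mem_Ioc hT.1 j).2.trans hT.2)

lemma minDist_coneGrid_succ_right_le (hd : 2 ≤ d) (hOpen : IsOpen D) (hConv : Convex ℝ D)
    (hξ : ξ ∈ closure D) (hv : ξ + v ∈ closure D) (hr : 0 < r) (hball : ball o r ⊆ D)
    (hT : T ∈ Ioc 0 1) (i j : ℕ) :
    minDist D (coneGrid ξ v o T i j) (coneGrid ξ v o T i (j + 1)) ≤ (‖ξ - o‖ + ‖v‖) / r := by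
  have hhalf : T * (1 / 2) ^ (j + 1) = T * (1 / 2) ^ j / 2 := by ring
  rw [coneGrid, coneGrid, hhalf]
  exact minDist_conePt_half_height_le hd hOpen hConv hξ hv hr hball
    (Ioc_subset_Icc_self (half_pow_mem_Ioc i)) (mul_half_pow_mem_Ioc hT.1 j).1
    ((mul_half_pow_mem_Ioc hT.1 j).2.trans hT.2)

lemma minDist_coneGrid_succ_left_le (hΛ : 2 ≤ Module.finrank ℝ Λ) (hvΛ : v ∈ Λ)
    (hOpen : IsOpen D) (hConv : Convex ℝ D) (hξ : ξ ∈ closure D) (hr : 0 < r)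
    (hflat : flatBall Λ (ξ + v) r ⊆ closure D) (ho : o ∈ D) (hT : T ∈ Ioo 0 1) (i j : ℕ) :
    minDist D (coneGrid ξ v o T i j) (coneGrid ξ v o T (i + 1) j) ≤ ‖v‖ / r := by
  have hhalf : (1 / 2 : ℝ) ^ (i + 1) = (1 / 2) ^ i / 2 := by ring
  rw [coneGrid, coneGrid, hhalf]
  exact minDist_conePt_half_le hΛ hvΛ hOpen hConv hξ hr hflat ho (half_pow_mem_Ioc i)
    ⟨(mul_half_pow_mem_Ioc hT.1 j).1, (mul_half_pow_mem_Ioc hT.1 j).2.trans_lt hT.2⟩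

lemma logGap_coneGrid {l : Euc d →L[ℝ] ℝ} {c : ℝ} (hlξ : l ξ = c) (hlv : l v = 0) (hlo : l o < c)
    (hT : 0 < T) (i j : ℕ) :
    logGap l c (coneGrid ξ v o T i j)
      = Real.log (T * (c - l o)) / 2 - j * Real.log 2 / 2 := by
  have hgap : c - l (coneGrid ξ v o T i j) = T * (c - l o) * (1 / 2) ^ j := by
    simp only [coneGrid, conePt, map_add, map_smul, smul_eq_mul, hlξ, hlv]
    ring
  have hT_gap : T * (c - l o) ≠ 0 := (mul_pos hT (sub_pos.mpr hlo)).ne'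
  rw [logGap, hgap, Real.log_mul hT_gap (by positivity), Real.log_pow, one_div, Real.log_inv]
  ring

lemma exists_logGap_coneGrid_separation (hOpen : IsOpen D) (hConv : Convex ℝ D)
    (hξ : ξ ∈ closure D) (hv : ξ + v ∈ closure D) (ho : o ∈ D)
    (hexit : ∀ ε : ℝ, 0 < ε → ξ - ε • v ∉ closure D) (n : ℕ) :
    ∃ (l : Euc d →L[ℝ] ℝ) (c : ℝ), (∀ x ∈ D, l x < c) ∧ ∃ T ∈ Ioc (0 : ℝ) (1 / 2), ∀ i j,
      n * Real.log 2 - Real.log 6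
        ≤ 2 * (logGap l c (coneGrid ξ v o T 0 i) - logGap l c (coneGrid ξ v o T n j)) := by
  have hα : (0 : ℝ) < (1 / 2) ^ n := by positivity
  obtain ⟨l, c, hl, T, ⟨hT0, hT2⟩, hcomp⟩ :=
    exists_separating_functional hConv hξ ho hα (hexit ((1 / 2) ^ n) hα)
  have hpos : ∀ i j, 0 < c - l (coneGrid ξ v o T i j) := fun i j =>
    sub_pos.mpr (hl _ (coneGrid_mem hOpen hConv hξ hv ho ⟨hT0, by linarith⟩ i j))
  refine ⟨l, c, hl, T, ⟨hT0, hT2⟩, fun i j => ?_⟩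
  have hgap : c - l (coneGrid ξ v o T n j)
      ≤ 6 * (1 / 2) ^ n * (c - l (coneGrid ξ v o T 0 i)) := by
    simpa only [coneGrid, pow_zero] using
      hcomp _ (mul_half_pow_mem_Ioc hT0 i) _ (mul_half_pow_mem_Ioc hT0 j)
  have hlog := Real.log_le_log (hpos n j) hgap
  rw [Real.log_mul (by positivity) (hpos 0 i).ne', Real.log_mul (by norm_num) hα.ne',
    Real.log_pow, one_div, Real.log_inv] at hlog
  simp only [logGap]
  linarith

section FlatCorner

variable {l : Euc d →L[ℝ] ℝ} {c δ : ℝ} (hΛ : 2 ≤ Module.finrank ℝ Λ) (hOpen : IsOpen D)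
  (hConv : Convex ℝ D) (hHyp : MinHyperbolic D) (hξ : ξ ∈ closure D) (hvΛ : v ∈ Λ) (hr : 0 < r)
  (hflat : flatBall Λ (ξ + v) r ⊆ closure D) (hball : ball o r ⊆ D)
  (hl : ∀ x ∈ D, l x < c) (hlξ : l ξ = c) (hlv : l v = 0)

include hΛ hOpen hConv hHyp hξ hvΛ hr hflat hball hl hlξ hlv

/-- A near-geodesic joining two opposite corners of the grid passes through a point at the middle
height, which is far from the two horizontal sides. -/
lemma exists_minDist_coneGrid_lt (hG : FourPointOn (minDist D) δ D) {T : ℝ} (hT : T ∈ Ioo 0 1)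
    {k : ℕ} {M : ℝ} (hM : (‖ξ - o‖ + ‖v‖) / r / 2 + (k + 1) * δ < M)
    (hk : 4 * M ≤ 2 ^ k * Real.log 2) :
    ∃ z ∈ D, (∃ j, minDist D (coneGrid ξ v o T 0 j) z < M) ∧
      ∃ j, minDist D (coneGrid ξ v o T (2 ^ k) j) z < M := by
  have hd : 2 ≤ d := hΛ.trans (by simpa using Submodule.finrank_le Λ)
  have ho : o ∈ D := hball (mem_ball_self hr)
  have hv : ξ + v ∈ closure D := by
    simpa using flatBall_subset_iff.mp hflat 0 Λ.zero_mem (by simpa using hr)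
  have hP := coneGrid_mem hOpen hConv hξ hv ho (Ioo_subset_Ioc_self hT)
  have hlog : (0 : ℝ) < 2 ^ k * Real.log 2 := by positivity
  have htop : ∀ i, logGap l c (coneGrid ξ v o T i 0) = Real.log (T * (c - l o)) / 2 := fun i => by
    rw [logGap_coneGrid hlξ hlv (hl o ho) hT.1, Nat.cast_zero]
    ring
  have hbot : ∀ i, logGap l c (coneGrid ξ v o T i (2 ^ k))
      = Real.log (T * (c - l o)) / 2 - 2 ^ k * Real.log 2 / 2 := fun i => by
    rw [logGap_coneGrid hlξ hlv (hl o ho) hT.1]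
    push_cast
    rfl
  obtain ⟨z, hz, hmid, hprod⟩ := hHyp.exists_eq_and_gromovProd_le hConv (hP 0 0)
    (hP (2 ^ k) (2 ^ k)) (continuousOn_logGap hl)
    (h := Real.log (T * (c - l o)) / 2 - 2 ^ k * Real.log 2 / 4)
    ⟨by rw [hbot]; linarith, by rw [htop]; linarith⟩ (half_pos (sub_pos.mpr hM))
  have hfar : ∀ i j, M ≤ |logGap l c (coneGrid ξ v o T i j) - logGap l c z| →
      M ≤ minDist D (coneGrid ξ v o T i j) z := fun i j h =>
    h.trans (abs_logGap_sub_le_minDist hd hOpen hConv hHyp hl (hP i j) hz)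
  obtain ⟨⟨i, -, hi⟩, j, -, hj⟩ := hG.exists_lt_and_exists_lt_of_grid (minDist_comm D) hz k hP
    (K := (‖ξ - o‖ + ‖v‖) / r) (M := M)
    (fun i j => (minDist_coneGrid_succ_left_le hΛ hvΛ hOpen hConv hξ hr hflat ho hT i j).trans <| by
      gcongr
      exact le_add_of_nonneg_left (norm_nonneg _))
    (minDist_coneGrid_succ_right_le hd hOpen hConv hξ hv hr hball (Ioo_subset_Ioc_self hT))
    (fun i => hfar i 0 <| le_trans (by rw [htop, hmid]; linarith) (le_abs_self _))
    (fun i => hfar i (2 ^ k) <| le_trans (by rw [hbot, hmid]; linarith) (neg_le_abs _))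
    (hprod.trans_lt (by linarith))
  exact ⟨z, hz, ⟨i, hi⟩, j, hj⟩

/-- The two sides `i = 0` and `i = 2 ^ k` of a large grid cannot both be close to one point: they
are separated by the gap to a hyperplane that nearly supports `D` at `ξ` transversally to `v`. -/
lemma not_fourPointOn_minDist_of_flatBall
    (hexit : ∀ ε : ℝ, 0 < ε → ξ - ε • v ∉ closure D) : ¬ FourPointOn (minDist D) δ D := by
  intro hG
  have hd : 2 ≤ d := hΛ.trans (by simpa using Submodule.finrank_le Λ)
  have ho : o ∈ D := hball (mem_ball_self hr)
  have hv : ξ + v ∈ closure D := by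
    simpa using flatBall_subset_iff.mp hflat 0 Λ.zero_mem (by simpa using hr)
  obtain ⟨K, hK⟩ : ∃ K, K = (‖ξ - o‖ + ‖v‖) / r := ⟨_, rfl⟩
  have hlog2 : 0 < Real.log 2 := by positivity
  obtain ⟨k, hk⟩ := exists_add_mul_le_two_pow ((2 * K + 4 * δ + 4 + Real.log 6) / Real.log 2)
    (4 * δ / Real.log 2)
  obtain ⟨M, hM⟩ : ∃ M, M = K / 2 + (k + 1) * δ + 1 := ⟨_, rfl⟩
  have hkM : 4 * M + Real.log 6 ≤ 2 ^ k * Real.log 2 := by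
    rw [← div_le_iff₀ hlog2]
    refine le_of_eq_of_le ?_ hk
    rw [hM]
    ring
  obtain ⟨l', c', hl', T, ⟨hT0, hT2⟩, hsep⟩ :=
    exists_logGap_coneGrid_separation hOpen hConv hξ hv ho hexit (2 ^ k)
  have hT : T ∈ Ioo 0 1 := ⟨hT0, by linarith⟩
  obtain ⟨z, hz, ⟨i, hi⟩, j, hj⟩ := exists_minDist_coneGrid_lt hΛ hOpen hConv hHyp hξ hvΛ hr
    hflat hball hl hlξ hlv hG hT (k := k) (M := M) (by rw [hM, hK]; linarith)
    (by linarith [Real.log_pos (show (1 : ℝ) < 6 by norm_num)])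
  have hP := coneGrid_mem hOpen hConv hξ hv ho (Ioo_subset_Ioc_self hT)
  have hleft := (abs_le.mp (abs_logGap_sub_le_minDist hd hOpen hConv hHyp hl' (hP 0 i) hz)).2
  have hright :=
    (abs_le.mp (abs_logGap_sub_le_minDist hd hOpen hConv hHyp hl' (hP (2 ^ k) j) hz)).1
  have hij := hsep i j
  push_cast at hij
  linarith

end FlatCorner

end Cone

/-! ### Faces of hyperbolic convex domains -/

section AffineGeometry

variable {E : Type*} [NormedAddCommGroup E] [InnerProductSpace ℝ E] {s D : Set E} {u m o : E}

lemma exists_flatBall_subset_of_convex [FiniteDimensional ℝ E] (hs : Convex ℝ s)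
    (hne : s.Nonempty) : ∃ u ∈ s, ∃ ρ > 0, flatBall (vectorSpan ℝ s) u ρ ⊆ s := by
  obtain ⟨-, ⟨u, hu⟩, huint, rfl⟩ := hne.intrinsicInterior hs
  obtain ⟨ρ, hρ, hball⟩ := Metric.isOpen_iff.mp isOpen_interior _ huint
  refine ⟨u, by simpa using interior_subset huint, ρ, hρ,
    flatBall_subset_iff.mpr fun y hy hyρ => ?_⟩
  have hmem : y +ᵥ u ∈ affineSpan ℝ s :=
    AffineSubspace.vadd_mem_of_mem_direction ((direction_affineSpan ℝ s).symm ▸ hy) hu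
  have hclose : (⟨y +ᵥ u, hmem⟩ : affineSpan ℝ s) ∈ ball ⟨u, hu⟩ ρ := by
    simpa [Subtype.dist_eq, dist_eq_norm] using hyρ
  simpa [add_comm] using interior_subset (hball hclose)

lemma exists_last_mem_ray (hs : IsClosed s) (hconv : Convex ℝ s) (hu : u ∈ s) (hm : u + m ∉ s) :
    ∃ t : ℝ, 0 ≤ t ∧ u + t • m ∈ s ∧ ∀ τ : ℝ, t < τ → u + τ • m ∉ s := by
  have hcomp : IsCompact (Icc (0 : ℝ) 1 ∩ {t | u + t • m ∈ s}) :=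
    isCompact_Icc.inter_right (hs.preimage (by fun_prop))
  obtain ⟨t, ⟨ht, hts⟩, hmax⟩ := hcomp.exists_isGreatest ⟨0, by simp, by simpa using hu⟩
  refine ⟨t, ht.1, hts, fun τ hτ hτs => ?_⟩
  rcases le_total τ 1 with hτ1 | hτ1
  · exact (hmax ⟨⟨ht.1.trans hτ.le, hτ1⟩, hτs⟩).not_gt hτ
  · refine hm ?_
    have h := hconv.add_smul_mem hu hτs (t := τ⁻¹) ⟨by positivity, inv_le_one_of_one_le₀ hτ1⟩
    rwa [inv_smul_smul₀ (by positivity)] at h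

lemma exists_last_mem_of_flatBall_subset {Λ : Submodule ℝ E} {ρ : ℝ} (hs : IsClosed s)
    (hconv : Convex ℝ s) (hρ : 0 < ρ) (hflat : flatBall Λ u ρ ⊆ s) (hmΛ : m ∈ Λ)
    (hm : u + m ∉ s) :
    ∃ v ∈ Λ, u - v ∈ s ∧ ∀ ε : ℝ, 0 < ε → u - v - ε • v ∉ s := by
  rw [flatBall_subset_iff] at hflat
  have hu : u ∈ s := by simpa using hflat 0 Λ.zero_mem (by simpa using hρ)
  obtain ⟨t, ht0, hts, hexit⟩ := exists_last_mem_ray hs hconv hu hm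
  have ht : 0 < t := by
    refine ht0.lt_of_ne' fun ht => ?_
    obtain ⟨τ, hτ, hτρ⟩ := exists_pos_mul_lt hρ ‖m‖
    refine hexit τ (ht ▸ hτ) (hflat _ (Λ.smul_mem τ hmΛ) ?_)
    rwa [norm_smul, Real.norm_of_nonneg hτ.le, mul_comm]
  refine ⟨-(t • m), Λ.neg_mem (Λ.smul_mem t hmΛ), by rwa [sub_neg_eq_add], fun ε hε => ?_⟩
  rw [show u - -(t • m) - ε • -(t • m) = u + (t * (1 + ε)) • m by module]
  exact hexit _ (lt_mul_of_one_lt_right ht (by linarith))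

/-- `o + m` is a convex combination of a far point of the ray and of a point of `D` slightly
beyond `o`, as seen from `u`. -/
lemma add_mem_of_ray_subset_closure (hOpen : IsOpen D) (hConv : Convex ℝ D) (ho : o ∈ D)
    (hray : ∀ t : ℝ, 0 ≤ t → u + t • m ∈ closure D) : o + m ∈ D := by
  have hnhds : ∀ᶠ τ : ℝ in nhds 0, o + τ • (o - u) ∈ D :=
    (hOpen.preimage (by fun_prop : Continuous fun τ : ℝ => o + τ • (o - u))).mem_nhds
      (by simpa using ho)
  obtain ⟨τ, hτD, (hτ : 0 < τ)⟩ := ((hnhds.filter_mono nhdsWithin_le_nhds).and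
    (self_mem_nhdsWithin (s := Ioi 0))).exists
  have h := combo_mem hOpen hConv (hray ((1 + τ) / τ) (by positivity)) hτD
    (s := 1 / (1 + τ)) (by positivity) (by rw [div_le_one (by positivity)]; linarith)
  convert h using 1
  match_scalars <;> field_simp <;> ring

end AffineGeometry

section Face

variable {d : ℕ} {D : Set (Euc d)} {Λ : Submodule ℝ (Euc d)} {δ : ℝ}

lemma MinHyperbolic.exists_notMem_closure (hHyp : MinHyperbolic D) (hOpen : IsOpen D)
    (hConv : Convex ℝ D) (hne : D.Nonempty) (hΛ : 2 ≤ Module.finrank ℝ Λ) (u : Euc d) :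
    ∃ m ∈ Λ, u + m ∉ closure D := by
  by_contra! hplane
  obtain ⟨o, ho⟩ := hne
  have hD : ∀ y ∈ Λ, o + y ∈ D := fun y hy =>
    add_mem_of_ray_subset_closure hOpen hConv ho fun t _ => hplane _ (Λ.smul_mem t hy)
  obtain ⟨v, hv, hv0⟩ := Λ.exists_mem_ne_zero_of_ne_bot (by rintro rfl; simp at hΛ)
  refine (hHyp o ho (o + v) (hD v hv) (by simpa using hv0)).not_ge ?_
  refine minDist_le_of_segment hConv ho (hD v hv) fun t _ => ?_
  rw [add_sub_cancel_left]
  refine (minMetric_eq_zero_of_plane hΛ hv fun y hy => ?_).le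
  rw [add_assoc]
  exact hD _ (Λ.add_mem (Λ.smul_mem t hv) hy)

theorem finrank_vectorSpan_face_le_one (hOpen : IsOpen D) (hConv : Convex ℝ D)
    (hHyp : MinHyperbolic D) (hG : FourPointOn (minDist D) δ D) {l : Euc d →L[ℝ] ℝ} {c : ℝ}
    (hl : ∀ x ∈ D, l x < c) :
    Module.finrank ℝ (vectorSpan ℝ (closure D ∩ {x | l x = c})) ≤ 1 := by
  by_contra! hΛ
  set S := closure D ∩ {x | l x = c}
  have hSconv : Convex ℝ S := hConv.closure.inter (convex_hyperplane l.isLinear c)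
  have hSne : S.Nonempty := by
    by_contra! hempty
    rw [hempty, vectorSpan_empty, finrank_bot] at hΛ
    omega
  have hlΛ : vectorSpan ℝ S ≤ l.ker := by
    refine Submodule.span_le.mpr ?_
    rintro _ ⟨x, hx, y, hy, rfl⟩
    simp [show l x = c from hx.2, show l y = c from hy.2]
  obtain ⟨u, hu, ρ, hρ, hflat⟩ := exists_flatBall_subset_of_convex hSconv hSne
  obtain ⟨o, ho⟩ := closure_nonempty_iff.mp ⟨u, hu.1⟩
  obtain ⟨R, hR, hball⟩ := Metric.isOpen_iff.mp hOpen o ho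
  obtain ⟨m, hm, humD⟩ := hHyp.exists_notMem_closure hOpen hConv ⟨o, ho⟩ hΛ u
  obtain ⟨v, hv, huvD, hexit⟩ := exists_last_mem_of_flatBall_subset isClosed_closure
    hConv.closure hρ (hflat.trans inter_subset_left) hm humD
  have hlv : l v = 0 := hlΛ hv
  have hluv : l (u - v) = c := by rw [map_sub, hlv, sub_zero, hu.2]
  have hflat_min : flatBall (vectorSpan ℝ S) (u - v + v) (min ρ R) ⊆ closure D := by
    rw [sub_add_cancel]
    exact fun z hz => (hflat ⟨hz.1, hz.2.trans_le (min_le_left ρ R)⟩).1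
  have hball_min : ball o (min ρ R) ⊆ D := (ball_subset_ball (min_le_right ρ R)).trans hball
  exact not_fourPointOn_minDist_of_flatBall hΛ hOpen hConv hHyp huvD hv (lt_min hρ hR) hflat_min
    hball_min hl hluv hlv hexit hG

end Face

section DiskInFace

variable {d : ℕ} {f : Euc 2 → Euc d}

lemma fderiv_apply_mem_vectorSpan {E F : Type*} [NormedAddCommGroup E] [NormedSpace ℝ E]
    [NormedAddCommGroup F] [InnerProductSpace ℝ F] [FiniteDimensional ℝ F] {f : E → F} {U : Set E}
    (hU : IsOpen U) {z : E} (hz : z ∈ U) (hf : DifferentiableAt ℝ f z) (v : E) :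
    fderiv ℝ f z v ∈ vectorSpan ℝ (f '' U) := by
  rw [← Submodule.orthogonal_orthogonal (vectorSpan ℝ (f '' U)), Submodule.mem_orthogonal]
  intro y hy
  have hconst : (fun w => innerSL ℝ y (f w)) =ᶠ[nhds z] fun _ => innerSL ℝ y (f z) := by
    filter_upwards [hU.mem_nhds hz] with w hw
    have horth : ⟪y, f w -ᵥ f z⟫ = 0 := Submodule.inner_left_of_mem_orthogonal
      (vsub_mem_vectorSpan ℝ (mem_image_of_mem f hw) (mem_image_of_mem f hz)) hy
    rwa [vsub_eq_sub, inner_sub_right, sub_eq_zero] at horth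
  have hzero := ((innerSL ℝ y).hasFDerivAt.comp z hf.hasFDerivAt).unique
    ((hasFDerivAt_const _ z).congr_of_eventuallyEq hconst)
  simpa using DFunLike.congr_fun hzero v

lemma ConformalHarmonicOnDisk.exists_pd_zero_ne_zero (hf : ConformalHarmonicOnDisk f)
    (hne : ∃ z ∈ unitDisk, ∃ w ∈ unitDisk, f z ≠ f w) : ∃ z ∈ unitDisk, pd 0 f z ≠ 0 := by
  by_contra! h0
  have hfderiv : EqOn (fderiv ℝ f) 0 unitDisk := fun z hz => by
    have h1 : pd 1 f z = 0 := by simpa [h0 z hz] using (hf.2.2 z hz).1.symm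
    refine ContinuousLinearMap.coe_injective
      ((EuclideanSpace.basisFun (Fin 2) ℝ).toBasis.ext fun i => ?_)
    fin_cases i
    · simpa [pd] using h0 z hz
    · simpa [pd] using h1
  obtain ⟨z, hz, w, hw, hzw⟩ := hne
  exact hzw (isOpen_unitDisk.is_const_of_fderiv_eq_zero (convex_ball 0 1).isPreconnected
    (fun y hy => (hf.differentiableAt hy).differentiableWithinAt) hfderiv hz hw)

lemma ConformalHarmonicOnDisk.two_le_finrank_vectorSpan (hf : ConformalHarmonicOnDisk f)
    (hne : ∃ z ∈ unitDisk, ∃ w ∈ unitDisk, f z ≠ f w) :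
    2 ≤ Module.finrank ℝ (vectorSpan ℝ (f '' unitDisk)) := by
  obtain ⟨z, hz, hz0⟩ := hf.exists_pd_zero_ne_zero hne
  have hmem := fderiv_apply_mem_vectorSpan isOpen_unitDisk hz (hf.differentiableAt hz)
  exact IsConformalPair.two_le_finrank (hf.2.2 z hz) hz0 (hmem _) (hmem _)

lemma ConformalHarmonicOnDisk.exists_image_subset_face (hf : ConformalHarmonicOnDisk f)
    {D : Set (Euc d)} (hOpen : IsOpen D) (hConv : Convex ℝ D)
    (hfD : ∀ z ∈ unitDisk, f z ∈ closure D) {p : Euc 2} (hp : p ∈ unitDisk)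
    (hfp : f p ∈ frontier D) :
    ∃ l : Euc d →L[ℝ] ℝ, (∀ x ∈ D, l x < l (f p)) ∧
      f '' unitDisk ⊆ closure D ∩ {x | l x = l (f p)} := by
  rw [hOpen.frontier_eq] at hfp
  obtain ⟨l, hl⟩ := geometric_hahn_banach_open_point hConv hOpen hfp.2
  have hle : closure D ⊆ {x | l x ≤ l (f p)} :=
    closure_minimal (fun x hx => (hl x hx).le) (isClosed_le l.continuous continuous_const)
  refine ⟨l, hl, image_subset_iff.mpr fun z hz => ⟨hfD z hz, ?_⟩⟩
  exact hf.apply_eq_of_isMaxOn hp (fun w hw => hle (hfD w hw)) hz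

end DiskInFace

theorem no_conformal_disk_in_boundary_of_gromov_hyperbolic_general {d : ℕ} {D : Set (Euc d)}
    (hOpen : IsOpen D) (hConv : Convex ℝ D) (hHyp : MinHyperbolic D) {δ : ℝ}
    (hG : FourPointOn (minDist D) δ D) {f : Euc 2 → Euc d} (hf : ConformalHarmonicOnDisk f)
    (hfD : ∀ z ∈ unitDisk, f z ∈ closure D) (hfb : ∃ p ∈ unitDisk, f p ∈ frontier D) :
    ∀ z ∈ unitDisk, ∀ w ∈ unitDisk, f z = f w := by
  by_contra! hne
  obtain ⟨p, hp, hfp⟩ := hfb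
  obtain ⟨l, hl, hface⟩ := hf.exists_image_subset_face hOpen hConv hfD hp hfp
  have hlower : 2 ≤ Module.finrank ℝ (vectorSpan ℝ (f '' unitDisk)) :=
    hf.two_le_finrank_vectorSpan hne
  have hmono : Module.finrank ℝ (vectorSpan ℝ (f '' unitDisk)) ≤
      Module.finrank ℝ (vectorSpan ℝ (closure D ∩ {x | l x = l (f p)})) :=
    Submodule.finrank_mono (vectorSpan_mono ℝ hface)
  have hupper : Module.finrank ℝ (vectorSpan ℝ (closure D ∩ {x | l x = l (f p)})) ≤ 1 :=
    finrank_vectorSpan_face_le_one hOpen hConv hHyp hG hl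
  omega

/-- If `D ⊆ ℝ^d` (`d ≥ 3`) is a hyperbolic convex domain such that
`(D, ρ_D)` is Gromov hyperbolic, then every conformal harmonic disk in `∂D` is constant. -/
theorem no_conformal_disk_in_boundary_of_gromov_hyperbolic
    (d : ℕ) (hd : 3 ≤ d) (D : Set (Euc d))
    (hOpen : IsOpen D) (hConn : IsConnected D) (hConv : Convex ℝ D)
    (hHyp : MinHyperbolic D)
    (hGromov : ∃ δ : ℝ, 0 ≤ δ ∧ ∀ x ∈ D, ∀ y ∈ D, ∀ z ∈ D, ∀ o ∈ D,
      min (gromovProd D o x z) (gromovProd D o y z) - δ ≤ gromovProd D o x y)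
    (f : Euc 2 → Euc d) (hf : ConformalHarmonicOnDisk f)
    (hfb : ∀ z ∈ unitDisk, f z ∈ frontier D) :
    ∀ z ∈ unitDisk, ∀ w ∈ unitDisk, f z = f w := by
  obtain ⟨δ, -, hG⟩ := hGromov
  exact no_conformal_disk_in_boundary_of_gromov_hyperbolic_general hOpen hConv hHyp hG hf
    (fun z hz => frontier_subset_closure (hfb z hz)) ⟨0, zero_mem_unitDisk, hfb 0 zero_mem_unitDisk⟩
end
end

section
/- Let d ≥ 3 and let D ⊂ ℝ^d be a bounded domain with C² boundary which admits a minimal plurisubharmonic defining function. Then the boundary ∂D is connected. -/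
open scoped RealInnerProductSpace ENNReal
open Metric Set Filter

noncomputable section

/-! The boundary is the intersection of the closed sets `closure D` and `Dᶜ`, which cover the simply
connected space; unicoherence makes it connected as soon as `Dᶜ` is connected. If `Dᶜ` were
disconnected, one of its pieces would be compact, the exterior of a large ball being connected. At a
point `p` of this piece farthest from a center `o ∈ D`, the points near `p` outside the sphere about
`o` through `p` lie in `D`, where `u < 0 = u p`. So `du` is a negative multiple of the outward
conormal of the sphere, and comparison with the sphere makes the Hessian of `u` negative definite on
the tangent space, which contains an orthonormal pair because `d ≥ 3`. This contradicts minimal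
plurisubharmonicity. -/

open scoped Topology

section Unicoherence

variable {X : Type*} [TopologicalSpace X] [SimplyConnectedSpace X] [LocallyPathConnectedSpace X]

lemma exists_continuousMap_circleExp_eq (f : C(X, Circle)) :
    ∃ F : C(X, ℝ), ∀ x, Circle.exp (F x) = f x := by
  obtain ⟨x₀⟩ : Nonempty X := inferInstance
  obtain ⟨F, ⟨-, hF⟩, -⟩ := Circle.isCoveringMap_exp.existsUnique_continuousMap_lifts f x₀
    (Complex.arg (f x₀)) (Circle.exp_arg _)
  exact ⟨F, congrFun hF⟩

lemma isPreconnected_inter_of_union_eq_univ [NormalSpace X] {A B : Set X}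
    (hA : IsClosed A) (hB : IsClosed B) (hAc : IsPreconnected A) (hBc : IsPreconnected B)
    (hAB : A ∪ B = univ) : IsPreconnected (A ∩ B) := by
  rw [isPreconnected_iff_subset_of_fully_disjoint_closed (hA.inter hB)]
  intro s t hs ht hst hdisj
  by_contra! h
  obtain ⟨⟨b, hb, hbs⟩, ⟨a, ha, hat⟩⟩ := And.imp not_subset.1 not_subset.1 h
  obtain ⟨φ, hφs, hφt, -⟩ := exists_continuous_zero_one_of_isClosed hs ht hdisj
  have hexp : ∀ x ∈ A ∩ B, Circle.exp (2 * Real.pi * φ x) = 1 := fun x hx ↦ by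
    rcases hst hx with hxs | hxt
    · simp [hφs hxs]
    · simp [hφt hxt]
  -- A lift of `f` to `ℝ` is constant on `B`, yet gains `2π` on `A` between `s` and `t`.
  classical
  let f : X → Circle := fun x ↦ if x ∈ A then Circle.exp (2 * Real.pi * φ x) else 1
  have hfrontier : frontier A ⊆ A ∩ B := fun x hx ↦
    ⟨hA.frontier_subset hx, closure_minimal (compl_subset_iff_union.2 hAB) hB
      (frontier_eq_closure_inter_closure.subset hx).2⟩
  have hf : Continuous f :=
    Continuous.if (fun x hx ↦ hexp x (hfrontier hx)) (by fun_prop) continuous_const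
  obtain ⟨F, hF⟩ := exists_continuousMap_circleExp_eq ⟨f, hf⟩
  have hFA : ∀ x ∈ A, Circle.exp (F x - 2 * Real.pi * φ x) = 1 := fun x hx ↦ by
    simp [Circle.exp_sub, hF, f, hx]
  have hFB : ∀ x ∈ B, Circle.exp (F x) = 1 := fun x hx ↦ by
    by_cases hxA : x ∈ A
    · simp [hF, f, hxA, hexp x ⟨hxA, hx⟩]
    · simp [hF, f, hxA]
  have hconstA : F a - 2 * Real.pi * φ a = F b - 2 * Real.pi * φ b :=
    Circle.isCoveringMap_exp.constOn_of_comp hAc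
      (g := fun x ↦ F x - 2 * Real.pi * φ x) (by fun_prop)
      (fun x hx y hy ↦ (hFA x hx).trans (hFA y hy).symm) ha.1 hb.1
  have hconstB : F a = F b :=
    Circle.isCoveringMap_exp.constOn_of_comp hBc (by fun_prop)
      (fun x hx y hy ↦ (hFB x hx).trans (hFB y hy).symm) ha.2 hb.2
  have hφa : φ a = 0 := hφs ((hst ha).resolve_right hat)
  have hφb : φ b = 1 := hφt ((hst hb).resolve_left hbs)
  rw [hφa, hφb] at hconstA
  linarith [Real.pi_pos]

lemma isPreconnected_frontier [NormalSpace X] {D : Set X} (hD : IsPreconnected D)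
    (hDc : IsPreconnected Dᶜ) : IsPreconnected (frontier D) := by
  rw [frontier_eq_closure_inter_closure]
  refine isPreconnected_inter_of_union_eq_univ isClosed_closure isClosed_closure hD.closure
    hDc.closure (eq_univ_of_univ_subset ?_)
  exact (union_compl_self D).symm.subset.trans (union_subset_union subset_closure subset_closure)

end Unicoherence

section CompactPiece

lemma isPreconnected_compl_closedBall {E : Type*} [NormedAddCommGroup E] [NormedSpace ℝ E]
    (h : 1 < Module.rank ℝ E) (x : E) {r : ℝ} (hr : 0 ≤ r) :
    IsPreconnected (closedBall x r)ᶜ := by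
  have himage : (closedBall x r)ᶜ =
      (fun q : ℝ × E ↦ x + q.1 • q.2) '' (Ioi r ×ˢ sphere (0 : E) 1) := by
    ext y
    simp only [mem_compl_iff, mem_closedBall, dist_eq_norm, not_le, mem_image, mem_prod, mem_Ioi,
      mem_sphere_zero_iff_norm, Prod.exists]
    constructor
    · intro hy
      have hy0 : ‖y - x‖ ≠ 0 := (hr.trans_lt hy).ne'
      exact ⟨‖y - x‖, ‖y - x‖⁻¹ • (y - x), ⟨hy, by simp [norm_smul, hy0]⟩, by
        rw [smul_inv_smul₀ hy0, add_sub_cancel]⟩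
    · rintro ⟨t, e, ⟨ht, he⟩, rfl⟩
      rwa [add_sub_cancel_left, norm_smul, he, mul_one, Real.norm_of_nonneg (hr.trans ht.le)]
  rw [himage]
  exact (isPreconnected_Ioi.prod (isPreconnected_sphere h 0 1)).image _ (by fun_prop)

lemma isPreconnected_of_isBounded_compl {E : Type*} [NormedAddCommGroup E] [NormedSpace ℝ E]
    [ProperSpace E] (h : 1 < Module.rank ℝ E) {C : Set E} (hC : IsClosed C)
    (hbdd : Bornology.IsBounded Cᶜ)
    (hpiece : ∀ K L, IsCompact K → IsClosed L → Disjoint K L → K ∪ L = C → K = ∅) :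
    IsPreconnected C := by
  obtain ⟨R, hR, hCR⟩ := hbdd.subset_closedBall_lt 0 0
  have hext : (closedBall 0 R)ᶜ ⊆ C := compl_subset_comm.1 hCR
  have subset_of_ext : ∀ s t, IsClosed s → IsClosed t → C ⊆ s ∪ t → Disjoint s t →
      (closedBall 0 R)ᶜ ⊆ t → C ⊆ t := by
    intro s t hs ht hst hdisj hext_t
    have hs_ball : s ⊆ closedBall 0 R := fun x hx ↦
      not_not.1 fun hxR ↦ hdisj.notMem_of_mem_left hx (hext_t hxR)
    have hempty : C ∩ s = ∅ := hpiece (C ∩ s) (C ∩ t)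
      ((isCompact_closedBall 0 R).of_isClosed_subset (hC.inter hs)
        (inter_subset_right.trans hs_ball))
      (hC.inter ht) (hdisj.mono inter_subset_right inter_subset_right)
      (by rw [← inter_union_distrib_left, inter_eq_left.2 hst])
    exact (disjoint_iff_inter_eq_empty.2 hempty).subset_right_of_subset_union hst
  rw [isPreconnected_iff_subset_of_fully_disjoint_closed hC]
  intro s t hs ht hst hdisj
  rcases isPreconnected_iff_subset_of_disjoint_closed.1
    (isPreconnected_compl_closedBall h (0 : E) hR.le) s t hs ht (hext.trans hst)
    (by rw [hdisj.inter_eq, inter_empty]) with hext_s | hext_t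
  · exact .inl (subset_of_ext t s ht hs (by rwa [union_comm]) hdisj.symm hext_s)
  · exact .inr (subset_of_ext s t hs ht hst hdisj hext_t)

lemma exists_mem_eventually_mem_compl_of_isCompact {X : Type*} [PseudoMetricSpace X]
    {K L : Set X} (hK : IsCompact K) (hKne : K.Nonempty) (hL : IsClosed L) (hKL : Disjoint K L)
    (o : X) : ∃ p ∈ K, ∀ᶠ y in 𝓝[(closedBall o (dist p o))ᶜ] p, y ∈ (K ∪ L)ᶜ := by
  obtain ⟨p, hpK, hpmax⟩ := hK.exists_isMaxOn hKne (f := fun x ↦ dist x o) (by fun_prop)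
  refine ⟨p, hpK, ?_⟩
  filter_upwards [self_mem_nhdsWithin, nhdsWithin_le_nhds
    (hL.isOpen_compl.mem_nhds (hKL.notMem_of_mem_left hpK))] with y hy hyL
  rintro (hyK | hyL')
  · exact hy (mem_closedBall.2 (hpmax hyK))
  · exact hyL hyL'

end CompactPiece

section SecondOrder

lemma deriv_deriv_nonpos_of_isLocalMax {g : ℝ → ℝ} {a : ℝ} (hmax : IsLocalMax g a)
    (hg : ContinuousAt g a) : deriv (deriv g) a ≤ 0 := by
  by_contra! hpos
  have hmin : IsLocalMin g a := isLocalMin_of_deriv_deriv_pos hpos hmax.deriv_eq_zero hg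
  have hconst : g =ᶠ[𝓝 a] fun _ ↦ g a := by
    filter_upwards [hmax, hmin] with t hle hge using le_antisymm hle hge
  have hzero : deriv (deriv g) a = 0 := by simp [hconst.deriv.deriv_eq]
  exact hpos.ne' hzero

lemma deriv_deriv_comp_parabola {E F : Type*} [NormedAddCommGroup E] [NormedSpace ℝ E]
    [NormedAddCommGroup F] [NormedSpace ℝ F] {u : E → F} {p : E} (hu : ContDiffAt ℝ 2 u p)
    (v w : E) :
    deriv (deriv fun t : ℝ ↦ u (p + t • v + t ^ 2 • w)) 0 =
      fderiv ℝ (fderiv ℝ u) p v v + (2 : ℝ) • fderiv ℝ u p w := by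
  set q : ℝ → E := fun t ↦ p + t • v + t ^ 2 • w with hq
  have hq0 : q 0 = p := by simp [hq]
  have hq' : ∀ t, HasDerivAt q (v + (2 * t) • w) t := fun t ↦ by
    simpa using (((hasDerivAt_id' t).smul_const v).const_add p).fun_add
      ((hasDerivAt_pow 2 t).smul_const w)
  have hq'' : HasDerivAt (fun t : ℝ ↦ v + (2 * t) • w) ((2 : ℝ) • w) 0 := by
    simpa using (((hasDerivAt_id (0 : ℝ)).const_mul 2).smul_const w).const_add v
  have hqp : Tendsto q (𝓝 0) (𝓝 p) := hq0 ▸ (hq' 0).continuousAt.tendsto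
  have hderiv : deriv (fun t ↦ u (q t)) =ᶠ[𝓝 0] fun t ↦ fderiv ℝ u (q t) (v + (2 * t) • w) := by
    filter_upwards [hqp.eventually (hu.eventually (by simp))] with t ht
    exact ((ht.differentiableAt (by simp)).hasFDerivAt.comp_hasDerivAt t (hq' t)).deriv
  have hu' : HasFDerivAt (fderiv ℝ u) (fderiv ℝ (fderiv ℝ u) p) (q 0) := by
    rw [hq0]
    exact ((hu.fderiv_right (m := 1) (by norm_num)).differentiableAt (by simp)).hasFDerivAt
  have hchain := (hu'.comp_hasDerivAt 0 (hq' 0)).clm_apply hq''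
  exact hderiv.deriv_eq.trans (hchain.deriv.trans (by simp [hq0]))

end SecondOrder

section TouchingSphere

lemma exists_eq_smul_of_forall_pos_imp_nonpos {𝕜 V : Type*} [Field 𝕜] [LinearOrder 𝕜]
    [IsStrictOrderedRing 𝕜] [AddCommGroup V] [Module 𝕜 V] {ℓ L : V →ₗ[𝕜] 𝕜} (hℓ : ℓ ≠ 0)
    (h : ∀ v, 0 < ℓ v → L v ≤ 0) : ∃ c : 𝕜, c ≤ 0 ∧ L = c • ℓ := by
  obtain ⟨n, hn⟩ := LinearMap.surjective hℓ 1
  have hker : ∀ w, ℓ w = 0 → L w = 0 := fun w hw ↦ by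
    by_contra hLw
    have hline := h (n + ((1 - L n) / L w) • w) (by simp [hn, hw])
    rw [map_add, map_smul, smul_eq_mul, div_mul_cancel₀ _ hLw] at hline
    linarith
  refine ⟨L n, h n (by simp [hn]), LinearMap.ext fun v ↦ ?_⟩
  have hv := hker (v - ℓ v • n) (by simp [hn])
  rw [map_sub, map_smul, sub_eq_zero] at hv
  simpa [mul_comm] using hv

lemma exists_orthonormal_pair {𝕜 F : Type*} [RCLike 𝕜] [NormedAddCommGroup F]
    [InnerProductSpace 𝕜 F] [FiniteDimensional 𝕜 F] (h : 2 ≤ Module.finrank 𝕜 F) :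
    ∃ v w : F, ‖v‖ = 1 ∧ ‖w‖ = 1 ∧ inner 𝕜 v w = 0 := by
  let b := stdOrthonormalBasis 𝕜 F
  exact ⟨b ⟨0, by lia⟩, b ⟨1, by lia⟩, b.norm_eq_one _, b.norm_eq_one _,
    b.inner_eq_zero (by simp)⟩

variable {E : Type*} [NormedAddCommGroup E] [InnerProductSpace ℝ E] {u : E → ℝ} {o p : E}

lemma exists_fderiv_eq_smul_of_isLocalMaxOn_compl_closedBall (hpo : p ≠ o)
    (hu : DifferentiableAt ℝ u p) (hmax : IsLocalMaxOn u (closedBall o (dist p o))ᶜ p) :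
    ∃ c : ℝ, c ≤ 0 ∧ fderiv ℝ u p = c • innerSL ℝ (p - o) := by
  have hhalf : ∀ v, 0 < ⟪p - o, v⟫ → fderiv ℝ u p v ≤ 0 := fun v hv ↦ by
    refine hmax.hasFDerivWithinAt_nonpos hu.hasFDerivAt.hasFDerivWithinAt
      (mem_posTangentConeAt_of_frequently_mem (Eventually.frequently ?_))
    filter_upwards [self_mem_nhdsWithin] with t ht
    rw [mem_compl_iff, mem_closedBall, not_le, dist_eq_norm, dist_eq_norm, add_sub_right_comm]
    refine lt_of_pow_lt_pow_left₀ 2 (norm_nonneg _) ?_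
    rw [norm_add_sq_real, inner_smul_right]
    have : 0 < t * ⟪p - o, v⟫ := mul_pos ht hv
    nlinarith [sq_nonneg ‖t • v‖]
  have hne : (innerSL ℝ (p - o) : E →ₗ[ℝ] ℝ) ≠ 0 := fun h ↦
    sub_ne_zero.2 hpo (inner_self_eq_zero.1 (LinearMap.congr_fun h (p - o)))
  obtain ⟨c, hc, hL⟩ :=
    exists_eq_smul_of_forall_pos_imp_nonpos (L := (fderiv ℝ u p : E →ₗ[ℝ] ℝ)) hne hhalf
  exact ⟨c, hc, ContinuousLinearMap.ext fun v ↦ LinearMap.congr_fun hL v⟩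

-- The coefficient of `n` makes the parabola osculate the circle of radius `‖n‖` about `0`: its
-- squared norm is constant up to a positive term in `t ^ 4`.
lemma norm_lt_norm_add_parabola {n v : E} (hn : n ≠ 0) (hv : v ≠ 0) (hnv : ⟪n, v⟫ = 0) {t : ℝ}
    (ht : t ≠ 0) : ‖n‖ < ‖n + t • v + t ^ 2 • (-(‖v‖ ^ 2 / (2 * ‖n‖ ^ 2)) • n)‖ := by
  set a : ℝ := ‖v‖ ^ 2 / (2 * ‖n‖ ^ 2) with ha
  have ha_mul : a * (2 * ‖n‖ ^ 2) = ‖v‖ ^ 2 := by rw [ha]; field_simp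
  have hsplit : n + t • v + t ^ 2 • (-a • n) = (1 - a * t ^ 2) • n + t • v := by module
  have hnorm : ‖(1 - a * t ^ 2) • n + t • v‖ ^ 2 = ‖n‖ ^ 2 + a ^ 2 * t ^ 4 * ‖n‖ ^ 2 := by
    rw [norm_add_sq_real, inner_smul_left, inner_smul_right, hnv, norm_smul, norm_smul, mul_pow,
      mul_pow, Real.norm_eq_abs, Real.norm_eq_abs, sq_abs, sq_abs]
    linear_combination (-t ^ 2) * ha_mul
  refine lt_of_pow_lt_pow_left₀ 2 (norm_nonneg _) ?_
  rw [hsplit, hnorm]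
  exact lt_add_of_pos_right _ (by positivity)

lemma hessian_le_of_isLocalMaxOn_compl_closedBall (hpo : p ≠ o) (hu : ContDiffAt ℝ 2 u p)
    (hmax : IsLocalMaxOn u (closedBall o (dist p o))ᶜ p) {v : E} (hv : ⟪p - o, v⟫ = 0) :
    fderiv ℝ (fderiv ℝ u) p v v ≤ ‖v‖ ^ 2 / ‖p - o‖ ^ 2 * fderiv ℝ u p (p - o) := by
  rcases eq_or_ne v 0 with rfl | hv0
  · simp
  have hn : p - o ≠ 0 := sub_ne_zero.2 hpo
  set a : ℝ := ‖v‖ ^ 2 / (2 * ‖p - o‖ ^ 2) with ha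
  let q : ℝ → E := fun t ↦ p + t • v + t ^ 2 • (-a • (p - o))
  have hq0 : q 0 = p := by simp [q]
  have hqc : ContinuousAt q 0 := by fun_prop
  have hout : ∀ t ≠ 0, q t ∈ (closedBall o (dist p o))ᶜ := fun t ht ↦ by
    have hqt : q t - o = p - o + t • v + t ^ 2 • (-a • (p - o)) := by
      simp only [q]
      abel
    rw [mem_compl_iff, mem_closedBall, not_le, dist_eq_norm, dist_eq_norm, hqt]
    exact norm_lt_norm_add_parabola hn hv0 hv ht
  have hqmax : IsLocalMax (fun t ↦ u (q t)) 0 := by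
    have hev := eventually_nhdsWithin_iff.1 hmax
    rw [← hq0] at hev
    filter_upwards [hqc.eventually hev] with t ht
    rcases eq_or_ne t 0 with rfl | ht0
    · exact le_rfl
    · exact ht (hq0.symm ▸ hout t ht0)
  have hsecond : deriv (deriv fun t ↦ u (q t)) 0 ≤ 0 :=
    deriv_deriv_nonpos_of_isLocalMax hqmax (hu.continuousAt.comp_of_eq hqc hq0)
  rw [deriv_deriv_comp_parabola hu, map_smul, smul_eq_mul, smul_eq_mul] at hsecond
  have h2a : ‖v‖ ^ 2 / ‖p - o‖ ^ 2 = 2 * a := by rw [ha]; ring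
  rw [h2a]
  linarith

end TouchingSphere

section MinimallyConvex

variable {E : Type*} [NormedAddCommGroup E] [InnerProductSpace ℝ E] {D : Set E} {u : E → ℝ}

/-- `u` is a `C²` defining function of `D`. Only its germ along `frontier D` is constrained, so the
neighborhood on which it is defined is not part of the data; that `u` is nonnegative off `D` near
the boundary follows from the other conditions. -/
structure IsC2DefiningFunction (u : E → ℝ) (D : Set E) : Prop where
  contDiffAt : ∀ x ∈ frontier D, ContDiffAt ℝ 2 u x
  eventually_neg : ∀ x ∈ frontier D, ∀ᶠ y in 𝓝[D] x, u y < 0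
  eq_zero : ∀ x ∈ frontier D, u x = 0
  fderiv_ne_zero : ∀ x ∈ frontier D, fderiv ℝ u x ≠ 0

/-- The sublevel set `{u < u x}` is minimally convex at `x`: the trace of the Hessian of `u` is
nonnegative on every `2`-plane tangent to the level set of `u` through `x`. This is the restriction
of minimal plurisubharmonicity to tangent planes; for `du ≠ 0` it says that the sum of the two
smallest principal curvatures of the level set is nonnegative. -/
def IsMinimallyConvexAt (u : E → ℝ) (x : E) : Prop :=
  ∀ v w : E, ‖v‖ = 1 → ‖w‖ = 1 → ⟪v, w⟫ = 0 → fderiv ℝ u x v = 0 → fderiv ℝ u x w = 0 →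
    0 ≤ fderiv ℝ (fderiv ℝ u) x v v + fderiv ℝ (fderiv ℝ u) x w w

lemma IsC2DefiningFunction.isOpen (hu : IsC2DefiningFunction u D) : IsOpen D := by
  rw [← disjoint_frontier_iff_isOpen, Set.disjoint_left]
  intro x hx hxD
  exact ((hu.eventually_neg x hx).self_of_nhdsWithin hxD).ne (hu.eq_zero x hx)

lemma IsC2DefiningFunction.of_isOpen {U : Set E} (hU : IsOpen U) (hfr : frontier D ⊆ U)
    (hu : ContDiffOn ℝ 2 u U) (hneg : ∀ x ∈ D ∩ U, u x < 0) (hzero : ∀ x ∈ frontier D, u x = 0)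
    (hgrad : ∀ x ∈ frontier D, fderiv ℝ u x ≠ 0) : IsC2DefiningFunction u D where
  contDiffAt x hx := hu.contDiffAt (hU.mem_nhds (hfr hx))
  eventually_neg x hx := by
    filter_upwards [self_mem_nhdsWithin, nhdsWithin_le_nhds (hU.mem_nhds (hfr hx))]
      with y hyD hyU using hneg y ⟨hyD, hyU⟩
  eq_zero := hzero
  fderiv_ne_zero := hgrad

lemma mem_frontier_of_eventually_compl_closedBall {o p : E} (hpo : p ≠ o) (hp : p ∉ D)
    (hD : ∀ᶠ y in 𝓝[(closedBall o (dist p o))ᶜ] p, y ∈ D) : p ∈ frontier D := by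
  have hp_sphere : p ∈ frontier (closedBall o (dist p o)) := by
    rw [frontier_closedBall _ (dist_ne_zero.2 hpo), mem_sphere]
  have : (𝓝[(closedBall o (dist p o))ᶜ] p).NeBot :=
    mem_closure_iff_nhdsWithin_neBot.1 (frontier_eq_closure_inter_closure.subset hp_sphere).2
  exact ⟨mem_closure_of_tendsto (tendsto_id.mono_left nhdsWithin_le_nhds) hD,
    fun h ↦ hp (interior_subset h)⟩

variable [FiniteDimensional ℝ E]

lemma not_isMinimallyConvexAt_of_isLocalMaxOn_compl_closedBall (hd : 3 ≤ Module.finrank ℝ E)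
    {o p : E} (hpo : p ≠ o) (hu : ContDiffAt ℝ 2 u p) (hgrad : fderiv ℝ u p ≠ 0)
    (hmax : IsLocalMaxOn u (closedBall o (dist p o))ᶜ p) : ¬ IsMinimallyConvexAt u p := by
  intro hconv
  have hn : p - o ≠ 0 := sub_ne_zero.2 hpo
  obtain ⟨c, hc, hfderiv⟩ := exists_fderiv_eq_smul_of_isLocalMaxOn_compl_closedBall hpo
    (hu.differentiableAt (by simp)) hmax
  have hc_neg : c < 0 := hc.lt_of_ne fun h ↦ hgrad (by rw [hfderiv, h, zero_smul])
  have htangent : ∀ v ∈ (ℝ ∙ (p - o))ᗮ, ⟪p - o, v⟫ = 0 ∧ fderiv ℝ u p v = 0 := fun v hv ↦ by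
    have hv' := Submodule.mem_orthogonal_singleton_iff_inner_right.1 hv
    exact ⟨hv', by rw [hfderiv, smul_apply, innerSL_apply_apply, hv', smul_zero]⟩
  have hhess : ∀ v ∈ (ℝ ∙ (p - o))ᗮ, ‖v‖ = 1 → fderiv ℝ (fderiv ℝ u) p v v ≤ c := by
    intro v hv hv1
    have h := hessian_le_of_isLocalMaxOn_compl_closedBall hpo hu hmax (htangent v hv).1
    have hn' : ‖p - o‖ ≠ 0 := norm_ne_zero_iff.2 hn
    rwa [hfderiv, smul_apply, innerSL_apply_apply, real_inner_self_eq_norm_sq, smul_eq_mul, hv1,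
      one_pow, mul_comm c, ← mul_assoc, one_div_mul_cancel (pow_ne_zero 2 hn'), one_mul] at h
  have hrank : 2 ≤ Module.finrank ℝ (ℝ ∙ (p - o))ᗮ := by
    have := (ℝ ∙ (p - o)).finrank_add_finrank_orthogonal
    rw [finrank_span_singleton hn] at this
    lia
  obtain ⟨⟨v, hv⟩, ⟨w, hw⟩, hv1, hw1, hvw⟩ := exists_orthonormal_pair (𝕜 := ℝ) hrank
  have htrace := hconv v w hv1 hw1 hvw (htangent v hv).2 (htangent w hw).2
  linarith [hhess v hv hv1, hhess w hw hw1]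

lemma IsC2DefiningFunction.isPreconnected_compl (hd : 3 ≤ Module.finrank ℝ E)
    (hne : D.Nonempty) (hbdd : Bornology.IsBounded D) (hu : IsC2DefiningFunction u D)
    (hconv : ∀ x ∈ frontier D, IsMinimallyConvexAt u x) : IsPreconnected Dᶜ := by
  have hrank : 1 < Module.rank ℝ E := by
    rw [← Module.finrank_eq_rank]
    exact_mod_cast (by lia : 1 < Module.finrank ℝ E)
  refine isPreconnected_of_isBounded_compl hrank hu.isOpen.isClosed_compl (by rwa [compl_compl])
    fun K L hK hL hKL hDc ↦ not_nonempty_iff_eq_empty.1 fun hKne ↦ ?_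
  obtain ⟨o, ho⟩ := hne
  obtain ⟨p, hpK, hpD⟩ := exists_mem_eventually_mem_compl_of_isCompact hK hKne hL hKL o
  rw [hDc, compl_compl] at hpD
  have hp : p ∉ D := hDc.subset (.inl hpK)
  have hpo : p ≠ o := fun h ↦ hp (h ▸ ho)
  have hpfr : p ∈ frontier D := mem_frontier_of_eventually_compl_closedBall hpo hp hpD
  have hmax : IsLocalMaxOn u (closedBall o (dist p o))ᶜ p := by
    filter_upwards [hpD, nhdsWithin_le_nhds (eventually_nhdsWithin_iff.1
      (hu.eventually_neg p hpfr))] with y hyD hy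
    exact (hu.eq_zero p hpfr).symm ▸ (hy hyD).le
  exact not_isMinimallyConvexAt_of_isLocalMaxOn_compl_closedBall hd hpo (hu.contDiffAt p hpfr)
    (hu.fderiv_ne_zero p hpfr) hmax (hconv p hpfr)

theorem boundary_connected_of_mpsh_defining_function_general (hd : 3 ≤ Module.finrank ℝ E)
    (hConn : IsConnected D) (hBdd : Bornology.IsBounded D) (hu : IsC2DefiningFunction u D)
    (hconv : ∀ x ∈ frontier D, IsMinimallyConvexAt u x) : IsConnected (frontier D) := by
  have : Nontrivial E := Module.nontrivial_of_finrank_pos (R := ℝ) (by lia)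
  have hne_univ : D ≠ univ := fun h ↦ NormedSpace.unbounded_univ ℝ E (h ▸ hBdd)
  exact ⟨nonempty_frontier_iff.2 ⟨hConn.nonempty, hne_univ⟩,
    isPreconnected_frontier hConn.isPreconnected
      (hu.isPreconnected_compl hd hConn.nonempty hBdd hconv)⟩

end MinimallyConvex

lemma hessQ_eq_fderiv_fderiv {d : ℕ} {u : Euc d → ℝ} {x : Euc d} (hu : ContDiffAt ℝ 2 u x)
    (v : Euc d) : hessQ u x v = fderiv ℝ (fderiv ℝ u) x v v := by
  have hu' : DifferentiableAt ℝ (fderiv ℝ u) x :=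
    (hu.fderiv_right (m := 1) (by norm_num)).differentiableAt (by simp)
  rw [hessQ, fderiv_clm_apply hu' (differentiableAt_const v)]
  simp

lemma isMinimallyConvexAt_of_hessQ {d : ℕ} {u : Euc d → ℝ} {x : Euc d}
    (hu : ContDiffAt ℝ 2 u x)
    (hmpsh : ∀ v w : Euc d, ‖v‖ = 1 → ‖w‖ = 1 → ⟪v, w⟫ = 0 → 0 ≤ hessQ u x v + hessQ u x w) :
    IsMinimallyConvexAt u x := fun v w hv hw hvw _ _ ↦ by
  simpa only [hessQ_eq_fderiv_fderiv hu] using hmpsh v w hv hw hvw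

/-- A bounded domain in `ℝ^d` (`d ≥ 3`) with `C²` boundary admitting a
minimal plurisubharmonic defining function has connected boundary. -/
theorem boundary_connected_of_mpsh_defining_function
    (d : ℕ) (hd : 3 ≤ d) (D : Set (Euc d))
    (hOpen : IsOpen D) (hConn : IsConnected D) (hBdd : Bornology.IsBounded D)
    (U : Set (Euc d)) (u : Euc d → ℝ) (hU : IsOpen U) (hfr : frontier D ⊆ U)
    (hu : ContDiffOn ℝ 2 u U)
    (hneg : D ∩ U = {x | x ∈ U ∧ u x < 0})
    (hzero : frontier D = {x | x ∈ U ∧ u x = 0})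
    (hgrad : ∀ x ∈ frontier D, fderiv ℝ u x ≠ 0)
    (hmpsh : ∀ x ∈ U, ∀ v w : Euc d, ‖v‖ = 1 → ‖w‖ = 1 → ⟪v, w⟫ = 0 →
      0 ≤ hessQ u x v + hessQ u x w) :
    IsConnected (frontier D) := by
  have hdef : IsC2DefiningFunction u D := .of_isOpen hU hfr hu (fun x hx ↦ (hneg.subset hx).2)
    (fun x hx ↦ (hzero.subset hx).2) hgrad
  exact boundary_connected_of_mpsh_defining_function_general (by simpa using hd) hConn hBdd hdef
    fun x hx ↦ isMinimallyConvexAt_of_hessQ (hdef.contDiffAt x hx) (hmpsh x (hfr hx))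
end
end
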